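/- arXiv:1904.10371 — 4 statements merged into one kernel-verified Lean document; each statement's English description precedes it below -/
import Mathlib

section
/- Under hypotheses (g1), (g2), (h1) and (hg), the constrained one-dimensional radial functional F attains its minimum on 𝒲_μ: there exists ū ∈ 𝒲_μ such that F(ū) ≤ F(u) for every u ∈ 𝒲_μ. -/
open MeasureTheory Set Filter
open scoped ENNReal

noncomputable section

/-- The space `𝒲` of functions `u` on `(0,R]`, locally absolutely continuous on `(0,R]`
(encoded by the representation `u r = -∫_r^R u'`), with `u R = 0` and
`r ↦ r^(N-1) |u' r|` in `L¹(0,R)`; `u'` is the a.e. derivative of `u`. -/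
structure RadW (N : ℕ) (R : ℝ) where
  u : ℝ → ℝ
  u' : ℝ → ℝ
  integ : IntegrableOn (fun r : ℝ => r ^ (N - 1) * |u' r|) (Ioc 0 R)
  rep : ∀ r ∈ Ioc (0:ℝ) R, u r = -∫ ρ in Ioc r R, u' ρ

/-- Membership in `𝒲_μ`: the gradient constraint `|u'(r)| ≤ μ(r)` a.e. on `(0,R)`. -/
def memWmu (N : ℕ) (R : ℝ) (μ : ℝ → ℝ≥0∞) (u : RadW N R) : Prop :=
  ∀ᵐ r ∂(volume.restrict (Ioc (0:ℝ) R)), ENNReal.ofReal |u.u' r| ≤ μ r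

/-- The extended-real integral `∫ f = ∫⁻ f⁺ - ∫⁻ f⁻`, with values in `[-∞,+∞]`. -/
def ERInt (f : ℝ → ℝ) (s : Set ℝ) : EReal :=
  ((∫⁻ x in s, ENNReal.ofReal (f x) : ℝ≥0∞) : EReal)
    - ((∫⁻ x in s, ENNReal.ofReal (-f x) : ℝ≥0∞) : EReal)

/-- The radial functional `F(u) = ∫₀^R r^(N-1) [g(|u'(r)|) + h(u(r))] dr`. -/
def Fcon (N : ℕ) (R : ℝ) (g h : ℝ → ℝ) (u : RadW N R) : EReal :=
  ERInt (fun r : ℝ => r ^ (N - 1) * (g |u.u' r| + h (u.u r))) (Ioc 0 R)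

/-- The constant `M := lim_{s→∞} g(s)/s ∈ (-∞,+∞]` (realized as a liminf in `[-∞,+∞]`;
the limit exists by convexity). -/
def MconstE (g : ℝ → ℝ) : EReal :=
  Filter.liminf (fun s : ℝ => ((g s / s : ℝ) : EReal)) Filter.atTop

/-- The right derivative `h'₊(0)` of a convex function `h` at `0`,
`h'₊(0) = inf_{t > 0} (h(t) - h(0))/t`. -/
def rightD (h : ℝ → ℝ) : ℝ := sInf ((fun t : ℝ => (h t - h 0) / t) '' Ioi 0)

/-- The left derivative `h'₋(0)` of a convex function `h` at `0`,
`h'₋(0) = sup_{t < 0} (h(t) - h(0))/t`. -/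
def leftD (h : ℝ → ℝ) : ℝ := sSup ((fun t : ℝ => (h t - h 0) / t) '' Iio 0)


theorem hilbert_min {E : Type*} [NormedAddCommGroup E] [InnerProductSpace ℝ E] [CompleteSpace E]
    (K : Set E) (J : E → ℝ) (hne : K.Nonempty) (B : ℝ) (hB : ∀ v ∈ K, ‖v‖ ≤ B)
    (hJ : ConvexOn ℝ K J) (hcl : ∀ c : ℝ, IsClosed {v | v ∈ K ∧ J v ≤ c})
    (hbd : BddBelow (J '' K)) : ∃ v ∈ K, ∀ w ∈ K, J v ≤ J w := by
  set c := sInf (J '' K) with hc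
  let S : ℕ → Set E := fun n => {v | v ∈ K ∧ J v ≤ c + 1 / ((n:ℝ) + 1)}
  have hSne : ∀ n, (S n).Nonempty := by
    intro n
    have hpos : (0:ℝ) < 1 / ((n:ℝ) + 1) := by positivity
    obtain ⟨y, ⟨v, hv, rfl⟩, hy⟩ := exists_lt_of_csInf_lt (hne.image J) (lt_add_of_pos_right c hpos)
    exact ⟨v, hv, hy.le⟩
  have hSc : ∀ n, Convex ℝ (S n) := fun n => hJ.convex_le _
  have hSanti : ∀ m n, n ≤ m → S m ⊆ S n := by
    intro m n hnm v hv
    refine ⟨hv.1, hv.2.trans ?_⟩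
    have : 1 / ((m:ℝ) + 1) ≤ 1 / ((n:ℝ) + 1) := by
      apply one_div_le_one_div_of_le (by positivity)
      have : (n:ℝ) ≤ m := by exact_mod_cast hnm
      linarith
    linarith
  have hex : ∀ n, ∃ v ∈ S n, ∀ w ∈ S n, ‖v‖ ^ 2 ≤ inner ℝ v w := by
    intro n
    obtain ⟨v, hv, hv2⟩ := exists_norm_eq_iInf_of_complete_convex (hSne n)
      (hcl _).isComplete (hSc n) (0:E)
    refine ⟨v, hv, fun w hw => ?_⟩
    have := (norm_eq_iInf_iff_real_inner_le_zero (hSc n) hv).1 hv2 w hw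
    rw [zero_sub, inner_neg_left, inner_sub_right, real_inner_self_eq_norm_sq] at this
    linarith
  choose v hv hvw using hex
  have hkey : ∀ m n, n ≤ m → ‖v m - v n‖ ^ 2 ≤ ‖v m‖ ^ 2 - ‖v n‖ ^ 2 := by
    intro m n hnm
    have h1 := hvw n (v m) (hSanti m n hnm (hv m))
    rw [norm_sub_sq_real, real_inner_comm]
    linarith
  have hmono : Monotone (fun n => ‖v n‖ ^ 2) := by
    intro n m hnm
    have := hkey m n hnm
    have h2 := sq_nonneg ‖v m - v n‖
    simp only; linarith
  have hbdd : BddAbove (range (fun n => ‖v n‖ ^ 2)) := by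
    refine ⟨B ^ 2, ?_⟩
    rintro _ ⟨n, rfl⟩
    exact pow_le_pow_left₀ (norm_nonneg _) (hB _ (hv n).1) 2
  have htend := tendsto_atTop_ciSup hmono hbdd
  have hcau : CauchySeq v := by
    rw [Metric.cauchySeq_iff']
    intro ε hε
    have hc2 := htend.cauchySeq
    rw [Metric.cauchySeq_iff'] at hc2
    obtain ⟨n0, hn0⟩ := hc2 (ε ^ 2) (by positivity)
    refine ⟨n0, fun n hn => ?_⟩
    have h1 := hn0 n hn
    rw [Real.dist_eq] at h1
    have h2 := hkey n n0 hn
    have h3 := le_abs_self (‖v n‖ ^ 2 - ‖v n0‖ ^ 2)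
    rw [dist_eq_norm]
    exact lt_of_pow_lt_pow_left₀ 2 hε.le (by linarith)
  obtain ⟨w, hw⟩ := cauchySeq_tendsto_of_complete hcau
  have hwS : ∀ n, w ∈ S n := by
    intro n
    refine (hcl _).mem_of_tendsto hw ?_
    filter_upwards [eventually_ge_atTop n] with m hm using hSanti m n hm (hv m)
  refine ⟨w, (hwS 0).1, fun z hz => ?_⟩
  have h1 : J w ≤ c := by
    have ht : Tendsto (fun n : ℕ => c + 1 / ((n:ℝ) + 1)) atTop (nhds (c + 0)) :=
      tendsto_const_nhds.add tendsto_one_div_add_atTop_nhds_zero_nat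
    rw [add_zero] at ht
    exact ge_of_tendsto' ht (fun n => (hwS n).2)
  exact h1.trans (csInf_le hbd ⟨z, hz, rfl⟩)

theorem ERInt_of_integrable (f : ℝ → ℝ) (s : Set ℝ) (hf : IntegrableOn f s) :
    ERInt f s = ((∫ x in s, f x : ℝ) : EReal) := by
  have h1 : ∫⁻ x in s, ENNReal.ofReal (f x) ≠ ⊤ := by
    refine ne_top_of_le_ne_top hf.2.ne (lintegral_mono fun x => ?_)
    exact Real.ofReal_le_enorm _
  have h2 : ∫⁻ x in s, ENNReal.ofReal (-f x) ≠ ⊤ := by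
    refine ne_top_of_le_ne_top hf.2.ne (lintegral_mono fun x => ?_)
    rw [← enorm_neg]
    exact Real.ofReal_le_enorm _
  unfold ERInt
  rw [integral_eq_lintegral_pos_part_sub_lintegral_neg_part hf, EReal.coe_sub,
    EReal.coe_ennreal_toReal h1, EReal.coe_ennreal_toReal h2]

theorem ERInt_mono_ae (f f' : ℝ → ℝ) (s : Set ℝ)
    (hf : ∀ᵐ x ∂(volume.restrict s), f x ≤ f' x) : ERInt f s ≤ ERInt f' s := by
  unfold ERInt
  refine EReal.sub_le_sub ?_ ?_
  · apply EReal.coe_ennreal_le_coe_ennreal_iff.2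
    refine lintegral_mono_ae ?_
    filter_upwards [hf] with x hx using ENNReal.ofReal_le_ofReal hx
  · apply EReal.coe_ennreal_le_coe_ennreal_iff.2
    refine lintegral_mono_ae ?_
    filter_upwards [hf] with x hx using ENNReal.ofReal_le_ofReal (by linarith)

theorem fub (n : ℕ) (R : ℝ) (hR : 0 < R) (d : ℝ → ℝ) (hd : ∀ r, 0 ≤ d r)
    (hdi : IntegrableOn (fun r : ℝ => r ^ n * d r) (Ioc 0 R)) :
    IntegrableOn (fun r : ℝ => r ^ n * ∫ s in Ioc r R, d s) (Ioc 0 R) ∧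
    IntegrableOn (fun s : ℝ => s ^ (n+1) / ((n:ℝ)+1) * d s) (Ioc 0 R) ∧
    ∫ r in Ioc 0 R, r ^ n * ∫ s in Ioc r R, d s
      = ∫ s in Ioc 0 R, s ^ (n+1) / ((n:ℝ)+1) * d s := by
  set ν := volume.restrict (Ioc (0:ℝ) R) with hν
  have hdm : AEStronglyMeasurable d ν := by
    have h1 : AEStronglyMeasurable (fun r : ℝ => (r ^ n)⁻¹ * (r ^ n * d r)) ν :=
      AEStronglyMeasurable.mul (by fun_prop) hdi.1
    refine h1.congr ?_
    filter_upwards [ae_restrict_mem measurableSet_Ioc] with r hr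
    have : r ^ n ≠ 0 := pow_ne_zero _ hr.1.ne'
    field_simp
  have hI2 : IntegrableOn (fun s : ℝ => s ^ (n+1) / ((n:ℝ)+1) * d s) (Ioc 0 R) := by
    refine Integrable.mono' (hdi.const_mul R) (by
      exact AEStronglyMeasurable.mul (by fun_prop) hdm) ?_
    filter_upwards [ae_restrict_mem measurableSet_Ioc] with r hr
    have h0 := hd r
    have h1 := hr.1
    rw [Real.norm_of_nonneg (by positivity), pow_succ]
    have : r ^ n * r / ((n:ℝ)+1) ≤ R * r ^ n := by
      rw [div_le_iff₀ (by positivity)]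
      have : 0 ≤ r ^ n := by positivity
      nlinarith [hr.2, mul_nonneg (mul_nonneg hR.le this) (Nat.cast_nonneg n : (0:ℝ) ≤ n), mul_le_mul_of_nonneg_left hr.2 this]
    calc _ ≤ R * r ^ n * d r := mul_le_mul_of_nonneg_right this h0
      _ = _ := by ring
  let Φ : ℝ × ℝ → ℝ := fun p => {p : ℝ × ℝ | p.1 < p.2}.indicator (fun p => p.1 ^ n * d p.2) p
  have hmeas : AEStronglyMeasurable Φ (ν.prod ν) := by
    refine AEStronglyMeasurable.indicator ?_ (measurableSet_lt measurable_fst measurable_snd)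
    exact AEStronglyMeasurable.mul (by fun_prop) hdm.comp_snd
  -- inner integral in r
  have hin1 : ∀ s ∈ Ioc 0 R, ∀ c : ℝ, IntegrableOn (fun r : ℝ => (Iio s).indicator (fun r => r ^ n * c) r) (Ioc 0 R) ∧ ∫ r in Ioc 0 R, (Iio s).indicator (fun r => r ^ n * c) r = s ^ (n+1) / ((n:ℝ)+1) * c := by
    intro s hs c
    have hc : IntegrableOn (fun r : ℝ => r ^ n * c) (Ioc 0 R) :=
      (((continuous_id.pow n).mul continuous_const).integrableOn_Icc).mono_set Ioc_subset_Icc_self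
    refine ⟨hc.indicator measurableSet_Iio, ?_⟩
    rw [setIntegral_indicator measurableSet_Iio]
    have : Ioc 0 R ∩ Iio s = Ioo 0 s := by
      ext x; simp only [mem_inter_iff, mem_Ioc, mem_Iio, mem_Ioo]
      constructor
      · rintro ⟨⟨a, b⟩, c⟩; exact ⟨a, c⟩
      · rintro ⟨a, b⟩; exact ⟨⟨a, b.le.trans hs.2⟩, b⟩
    rw [this, ← integral_Ioc_eq_integral_Ioo, integral_mul_const,
      ← intervalIntegral.integral_of_le hs.1.le, integral_pow]
    simp
  have hΦ1 : ∀ s r, Φ (r, s) = (Iio s).indicator (fun r => r ^ n * d s) r := by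
    intro s r
    simp only [Φ, indicator, mem_ofPred_eq, mem_Iio]
  have hint : Integrable Φ (ν.prod ν) := by
    rw [integrable_prod_iff' hmeas]
    constructor
    · filter_upwards [ae_restrict_mem measurableSet_Ioc] with s hs
      simp only [hΦ1]
      exact (hin1 s hs (d s)).1
    · refine hI2.congr ?_
      filter_upwards [ae_restrict_mem measurableSet_Ioc] with s hs
      rw [← (hin1 s hs (d s)).2]
      refine setIntegral_congr_fun measurableSet_Ioc fun r hr => ?_
      simp only [hΦ1]
      rw [Real.norm_of_nonneg]
      have h0 := hd s
      have h1 := hr.1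
      by_cases hrs : r ∈ Iio s
      · rw [indicator_of_mem hrs]; positivity
      · rw [indicator_of_notMem hrs]
  have hin2 : ∀ r ∈ Ioc 0 R, ∫ s, Φ (r, s) ∂ν = r ^ n * ∫ s in Ioc r R, d s := by
    intro r hr
    have : ∀ s, Φ (r, s) = (Ioi r).indicator (fun s => r ^ n * d s) s := by
      intro s
      simp only [Φ, indicator, mem_ofPred_eq, mem_Ioi]
    simp only [this]
    rw [hν, setIntegral_indicator measurableSet_Ioi, integral_const_mul]
    have : Ioc 0 R ∩ Ioi r = Ioc r R := by
      ext x; simp only [mem_inter_iff, mem_Ioc, mem_Ioi]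
      constructor
      · rintro ⟨⟨a, b⟩, c⟩; exact ⟨c, b⟩
      · rintro ⟨a, b⟩; exact ⟨⟨hr.1.trans a, b⟩, a⟩
    rw [this]
  refine ⟨?_, hI2, ?_⟩
  · refine hint.integral_prod_left.congr ?_
    filter_upwards [ae_restrict_mem measurableSet_Ioc] with r hr using hin2 r hr
  · have h1 : ∫ r, ∫ s, Φ (r, s) ∂ν ∂ν = ∫ s, ∫ r, Φ (r, s) ∂ν ∂ν :=
      integral_integral_swap (f := fun r s => Φ (r, s)) hint
    rw [hν] at h1
    rw [← setIntegral_congr_fun measurableSet_Ioc hin2, h1]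
    refine setIntegral_congr_fun measurableSet_Ioc fun s hs => ?_
    simp only [hΦ1]
    exact (hin1 s hs (d s)).2

def Jf (n : ℕ) (R : ℝ) (g h : ℝ → ℝ) (v : ℝ → ℝ) : ℝ :=
  ∫ r in Ioc 0 R, r ^ n * (g |v r| + h (∫ ρ in Ioc r R, v ρ))

def Adm (R σ a : ℝ) (μ : ℝ → ℝ≥0∞) (v : ℝ → ℝ) : Prop :=
  (∀ᵐ r ∂(volume.restrict (Ioc (0:ℝ) R)), 0 ≤ v r ∧ v r ≤ σ ∧ ENNReal.ofReal (v r) ≤ μ r) ∧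
    ∫ r in Ioc 0 R, v r ≤ a

theorem Ioc_le_restrict {r R : ℝ} (hr : 0 ≤ r) :
    volume.restrict (Ioc r R) ≤ volume.restrict (Ioc (0:ℝ) R) :=
  Measure.restrict_mono (Ioc_subset_Ioc_left hr) le_rfl

theorem adm_int {R σ a : ℝ} {μ : ℝ → ℝ≥0∞} {v : ℝ → ℝ} (hv : Adm R σ a μ v)
    (hm : AEStronglyMeasurable v (volume.restrict (Ioc (0:ℝ) R))) :
    IntegrableOn v (Ioc 0 R) := by
  refine Integrable.mono' (integrable_const σ) hm ?_
  filter_upwards [hv.1] with r hr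
  rw [Real.norm_of_nonneg hr.1]; exact hr.2.1

theorem adm_prim {R σ a : ℝ} {μ : ℝ → ℝ≥0∞} {v : ℝ → ℝ} (hv : Adm R σ a μ v)
    (hm : AEStronglyMeasurable v (volume.restrict (Ioc (0:ℝ) R))) {r : ℝ} (hr : r ∈ Icc 0 R) :
    (∫ ρ in Ioc r R, v ρ) ∈ Icc 0 a := by
  constructor
  · apply integral_nonneg_of_ae
    filter_upwards [ae_mono (Ioc_le_restrict hr.1) hv.1] with x hx using hx.1
  · refine le_trans ?_ hv.2
    refine setIntegral_mono_set (adm_int hv hm) ?_ ?_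
    · filter_upwards [hv.1] with x hx using hx.1
    · exact (Ioc_subset_Ioc_left hr.1).eventuallyLE

theorem prim_cont {R : ℝ} (hR : 0 < R) {v : ℝ → ℝ} (hv : IntegrableOn v (Ioc 0 R)) :
    ContinuousOn (fun r => ∫ ρ in Ioc r R, v ρ) (Icc 0 R) := by
  have h1 : IntegrableOn v (uIcc 0 R) := by
    rw [uIcc_of_le hR.le, integrableOn_Icc_iff_integrableOn_Ioc]; exact hv
  have h2 := intervalIntegral.continuousOn_primitive_interval_left h1
  rw [uIcc_of_le hR.le] at h2
  refine h2.congr fun r hr => ?_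
  simp only
  rw [intervalIntegral.integral_of_le hr.2]

theorem int_meas {n : ℕ} {R : ℝ} (hR : 0 < R) {g h : ℝ → ℝ} (hg : Continuous fun z => g |z|)
    (hh : Continuous h) {v : ℝ → ℝ} (hv : IntegrableOn v (Ioc 0 R)) :
    AEStronglyMeasurable (fun r : ℝ => r ^ n * (g |v r| + h (∫ ρ in Ioc r R, v ρ)))
      (volume.restrict (Ioc (0:ℝ) R)) := by
  refine AEStronglyMeasurable.mul (by fun_prop) (AEStronglyMeasurable.add ?_ ?_)
  · exact hg.comp_aestronglyMeasurable hv.1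
  · refine hh.comp_aestronglyMeasurable ?_
    exact ((prim_cont hR hv).mono Ioc_subset_Icc_self).aestronglyMeasurable measurableSet_Ioc

theorem int_bound {n : ℕ} {R : ℝ} (hR : 0 < R) {g h : ℝ → ℝ} (hg : Continuous fun z => g |z|)
    (hh : Continuous h) (σ a : ℝ) (μ : ℝ → ℝ≥0∞) : ∃ C : ℝ, ∀ v : ℝ → ℝ, Adm R σ a μ v →
      AEStronglyMeasurable v (volume.restrict (Ioc (0:ℝ) R)) →
      ∀ᵐ r ∂(volume.restrict (Ioc (0:ℝ) R)),
        ‖r ^ n * (g |v r| + h (∫ ρ in Ioc r R, v ρ))‖ ≤ C := by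
  obtain ⟨C1, h1⟩ := (isCompact_Icc (a := (0:ℝ)) (b := σ)).exists_bound_of_continuousOn hg.continuousOn
  obtain ⟨C2, h2⟩ := (isCompact_Icc (a := (0:ℝ)) (b := a)).exists_bound_of_continuousOn hh.continuousOn
  refine ⟨R ^ n * (C1 + C2), fun v hv hm => ?_⟩
  filter_upwards [hv.1, ae_restrict_mem measurableSet_Ioc] with r hr hrR
  rw [norm_mul]
  refine mul_le_mul ?_ ?_ (norm_nonneg _) (by positivity)
  · rw [norm_pow, Real.norm_of_nonneg hrR.1.le]
    exact pow_le_pow_left₀ hrR.1.le hrR.2 n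
  · exact (norm_add_le _ _).trans (add_le_add (h1 _ ⟨hr.1, hr.2.1⟩)
      (h2 _ (adm_prim hv hm ⟨hrR.1.le, hrR.2⟩)))

theorem int_integrable {n : ℕ} {R : ℝ} (hR : 0 < R) {g h : ℝ → ℝ} (hg : Continuous fun z => g |z|)
    (hh : Continuous h) {σ a : ℝ} {μ : ℝ → ℝ≥0∞} {v : ℝ → ℝ} (hv : Adm R σ a μ v)
    (hm : AEStronglyMeasurable v (volume.restrict (Ioc (0:ℝ) R))) :
    IntegrableOn (fun r : ℝ => r ^ n * (g |v r| + h (∫ ρ in Ioc r R, v ρ))) (Ioc 0 R) := by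
  obtain ⟨C, hC⟩ := int_bound (n := n) hR hg hh σ a μ
  exact Integrable.mono' (integrable_const C) (int_meas hR hg hh (adm_int hv hm)) (hC v hv hm)

theorem prim_congr {R : ℝ} {v w : ℝ → ℝ} (hvw : v =ᵐ[volume.restrict (Ioc (0:ℝ) R)] w) {r : ℝ}
    (hr : 0 ≤ r) : ∫ ρ in Ioc r R, v ρ = ∫ ρ in Ioc r R, w ρ :=
  integral_congr_ae (ae_mono (Ioc_le_restrict hr) hvw)

theorem Jf_congr {n : ℕ} {R : ℝ} {g h : ℝ → ℝ} {v w : ℝ → ℝ}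
    (hvw : v =ᵐ[volume.restrict (Ioc (0:ℝ) R)] w) : Jf n R g h v = Jf n R g h w := by
  refine integral_congr_ae ?_
  filter_upwards [hvw, ae_restrict_mem measurableSet_Ioc] with r hr hrR
  rw [hr, prim_congr hvw hrR.1.le]

theorem Adm_congr {R σ a : ℝ} {μ : ℝ → ℝ≥0∞} {v w : ℝ → ℝ}
    (hvw : v =ᵐ[volume.restrict (Ioc (0:ℝ) R)] w) (hv : Adm R σ a μ v) : Adm R σ a μ w := by
  refine ⟨?_, ?_⟩
  · filter_upwards [hvw, hv.1] with r hr h; rwa [← hr]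
  · rw [← integral_congr_ae hvw]; exact hv.2

theorem Adm_memLp {R σ a : ℝ} {μ : ℝ → ℝ≥0∞} {v : ℝ → ℝ} (hv : Adm R σ a μ v)
    (hm : AEStronglyMeasurable v (volume.restrict (Ioc (0:ℝ) R))) :
    MemLp v 2 (volume.restrict (Ioc (0:ℝ) R)) := by
  refine MemLp.of_bound hm σ ?_
  filter_upwards [hv.1] with r hr
  rw [Real.norm_of_nonneg hr.1]; exact hr.2.1

theorem Adm_conv {R σ a : ℝ} {μ : ℝ → ℝ≥0∞} {v w : ℝ → ℝ}
    (hv : Adm R σ a μ v) (hw : Adm R σ a μ w)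
    (hvm : IntegrableOn v (Ioc 0 R)) (hwm : IntegrableOn w (Ioc 0 R))
    {α β : ℝ} (hα : 0 ≤ α) (hβ : 0 ≤ β) (hab : α + β = 1) :
    Adm R σ a μ (fun r => α * v r + β * w r) := by
  refine ⟨?_, ?_⟩
  · filter_upwards [hv.1, hw.1] with r h1 h2
    refine ⟨by nlinarith [mul_nonneg hα h1.1, mul_nonneg hβ h2.1], ?_, ?_⟩
    · calc _ ≤ α * σ + β * σ := add_le_add (mul_le_mul_of_nonneg_left h1.2.1 hα)
            (mul_le_mul_of_nonneg_left h2.2.1 hβ)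
        _ = σ := by rw [← add_mul, hab, one_mul]
    · have : α * v r + β * w r ≤ max (v r) (w r) := by
        calc _ ≤ α * max (v r) (w r) + β * max (v r) (w r) :=
              add_le_add (mul_le_mul_of_nonneg_left (le_max_left _ _) hα)
                (mul_le_mul_of_nonneg_left (le_max_right _ _) hβ)
          _ = _ := by rw [← add_mul, hab, one_mul]
      refine (ENNReal.ofReal_le_ofReal this).trans ?_
      rcases max_choice (v r) (w r) with h | h <;> rw [h]
      exacts [h1.2.2, h2.2.2]
  · rw [integral_add (hvm.const_mul α) (hwm.const_mul β), integral_const_mul, integral_const_mul]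
    calc _ ≤ α * a + β * a := add_le_add (mul_le_mul_of_nonneg_left hv.2 hα)
            (mul_le_mul_of_nonneg_left hw.2 hβ)
        _ = a := by rw [← add_mul, hab, one_mul]

theorem Jf_conv {n : ℕ} {R : ℝ} (hR : 0 < R) {g h : ℝ → ℝ} (hg : Continuous fun z => g |z|)
    (hh : Continuous h) (hg1 : ConvexOn ℝ univ (fun z : ℝ => g |z|)) (hh1 : ConvexOn ℝ univ h)
    {σ a : ℝ} {μ : ℝ → ℝ≥0∞} {v w : ℝ → ℝ}
    (hv : Adm R σ a μ v) (hw : Adm R σ a μ w)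
    (hvm : IntegrableOn v (Ioc 0 R)) (hwm : IntegrableOn w (Ioc 0 R))
    {α β : ℝ} (hα : 0 ≤ α) (hβ : 0 ≤ β) (hab : α + β = 1) :
    Jf n R g h (fun r => α * v r + β * w r) ≤ α * Jf n R g h v + β * Jf n R g h w := by
  have hc := Adm_conv hv hw hvm hwm hα hβ hab
  have i1 := int_integrable (n := n) hR hg hh hv hvm.1
  have i2 := int_integrable (n := n) hR hg hh hw hwm.1
  have i3 := int_integrable (n := n) hR hg hh hc ((hvm.const_mul α).add (hwm.const_mul β)).1
  unfold Jf
  rw [← integral_const_mul, ← integral_const_mul, ← integral_add (i1.const_mul α) (i2.const_mul β)]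
  refine setIntegral_mono_on i3 ((i1.const_mul α).add (i2.const_mul β)) measurableSet_Ioc ?_
  intro r hr
  have e : ∫ ρ in Ioc r R, (α * v ρ + β * w ρ)
      = α * (∫ ρ in Ioc r R, v ρ) + β * (∫ ρ in Ioc r R, w ρ) := by
    have s := Ioc_subset_Ioc_left (b := R) hr.1.le
    rw [integral_add ((hvm.mono_set s).const_mul α) ((hwm.mono_set s).const_mul β),
      integral_const_mul, integral_const_mul]
  rw [e]
  have c1 := hg1.2 (mem_univ (v r)) (mem_univ (w r)) hα hβ hab
  have c2 := hh1.2 (mem_univ (∫ ρ in Ioc r R, v ρ)) (mem_univ (∫ ρ in Ioc r R, w ρ)) hα hβ hab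
  simp only [smul_eq_mul] at c1 c2
  have hp : 0 ≤ r ^ n := pow_nonneg hr.1.le n
  calc _ ≤ r ^ n * ((α * g |v r| + β * g |w r|) + (α * h (∫ ρ in Ioc r R, v ρ)
        + β * h (∫ ρ in Ioc r R, w ρ))) := mul_le_mul_of_nonneg_left (add_le_add c1 c2) hp
    _ = _ := by ring

theorem Jf_lim {n : ℕ} {R : ℝ} (hR : 0 < R) {g h : ℝ → ℝ} (hg : Continuous fun z => g |z|)
    (hh : Continuous h) {σ a : ℝ} {μ : ℝ → ℝ≥0∞} {v : ℕ → ℝ → ℝ} {w : ℝ → ℝ}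
    (hv : ∀ k, Adm R σ a μ (v k))
    (hvm : ∀ k, AEStronglyMeasurable (v k) (volume.restrict (Ioc (0:ℝ) R)))
    (hlim : ∀ᵐ r ∂(volume.restrict (Ioc (0:ℝ) R)), Tendsto (fun k => v k r) atTop (nhds (w r))) :
    Adm R σ a μ w ∧ Tendsto (fun k => Jf n R g h (v k)) atTop (nhds (Jf n R g h w)) := by
  have hall := ae_all_iff.2 fun k => (hv k).1
  have hprim : ∀ r, 0 ≤ r → Tendsto (fun k => ∫ ρ in Ioc r R, v k ρ) atTop
      (nhds (∫ ρ in Ioc r R, w ρ)) := by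
    intro r hr
    have hle := Ioc_le_restrict (R := R) hr
    refine tendsto_integral_of_dominated_convergence (fun _ => σ)
      (fun k => (hvm k).mono_measure hle) (integrable_const σ) ?_ (ae_mono hle hlim)
    intro k
    filter_upwards [ae_mono hle (hv k).1] with x hx
    rw [Real.norm_of_nonneg hx.1]; exact hx.2.1
  constructor
  · constructor
    · filter_upwards [hall, hlim] with r h1 h2
      refine ⟨ge_of_tendsto' h2 fun k => (h1 k).1, le_of_tendsto' h2 fun k => (h1 k).2.1, ?_⟩
      exact le_of_tendsto' ((ENNReal.continuous_ofReal.tendsto _).comp h2) fun k => (h1 k).2.2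
    · exact le_of_tendsto' (hprim 0 le_rfl) fun k => (hv k).2
  · obtain ⟨C, hC⟩ := int_bound (n := n) hR hg hh σ a μ
    refine tendsto_integral_of_dominated_convergence (fun _ => C)
      (fun k => int_meas hR hg hh (adm_int (hv k) (hvm k))) (integrable_const C)
      (fun k => hC _ (hv k) (hvm k)) ?_
    filter_upwards [hlim, ae_restrict_mem measurableSet_Ioc] with r h2 hr
    refine Tendsto.const_mul _ (Tendsto.add ?_ ?_)
    · exact (hg.tendsto _).comp h2
    · exact (hh.tendsto _).comp (hprim r hr.1.le)

theorem exists_min_adm (n : ℕ) {R : ℝ} (hR : 0 < R) {g h : ℝ → ℝ}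
    (hg1 : ConvexOn ℝ univ (fun z : ℝ => g |z|)) (hh1 : ConvexOn ℝ univ h)
    (hg : Continuous fun z => g |z|) (hh : Continuous h)
    {σ a : ℝ} (hσ : 0 ≤ σ) (ha : 0 ≤ a) (μ : ℝ → ℝ≥0∞) :
    ∃ v : ℝ → ℝ, Adm R σ a μ v ∧ AEStronglyMeasurable v (volume.restrict (Ioc (0:ℝ) R)) ∧
      ∀ w : ℝ → ℝ, Adm R σ a μ w → AEStronglyMeasurable w (volume.restrict (Ioc (0:ℝ) R)) →
        Jf n R g h v ≤ Jf n R g h w := by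
  set ν := volume.restrict (Ioc (0:ℝ) R) with hν
  let K : Set (Lp ℝ 2 ν) := {v | Adm R σ a μ v}
  have hmeas : ∀ v : Lp ℝ 2 ν, AEStronglyMeasurable v ν := fun v => Lp.aestronglyMeasurable v
  have hcomb : ∀ (v w : Lp ℝ 2 ν) (α β : ℝ),
      ((α • v + β • w : Lp ℝ 2 ν) : ℝ → ℝ) =ᵐ[ν] fun r => α * v r + β * w r := by
    intro v w α β
    filter_upwards [Lp.coeFn_add (α • v) (β • w), Lp.coeFn_smul α v, Lp.coeFn_smul β w] with r h1 h2 h3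
    rw [h1, Pi.add_apply, h2, h3]; rfl
  obtain ⟨C, hC⟩ := int_bound (n := n) hR hg hh σ a μ
  obtain ⟨v, hv, hmin⟩ := hilbert_min K (fun v => Jf n R g h v)
    ⟨0, by
      refine Adm_congr (v := fun _ => 0) (Lp.coeFn_zero ℝ 2 ν).symm ⟨?_, by simpa using ha⟩
      exact ae_of_all _ fun r => ⟨le_rfl, hσ, by simp⟩⟩
    (measureUnivNNReal ν ^ (2:ℝ≥0∞).toReal⁻¹ * σ) (by
      intro v hv
      exact Lp.norm_le_of_ae_bound (f := v) hσ (by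
        filter_upwards [hv.1] with r hr
        rw [Real.norm_of_nonneg hr.1]; exact hr.2.1))
    ⟨by
      intro v hv w hw α β hα hβ hab
      exact Adm_congr (hcomb v w α β).symm
        (Adm_conv hv hw (adm_int hv (hmeas v)) (adm_int hw (hmeas w)) hα hβ hab),
     by
      intro v hv w hw α β hα hβ hab
      simp only [smul_eq_mul]
      rw [Jf_congr (hcomb v w α β)]
      exact Jf_conv hR hg hh hg1 hh1 hv hw (adm_int hv (hmeas v)) (adm_int hw (hmeas w)) hα hβ hab⟩
    (by
      intro c
      refine IsSeqClosed.isClosed ?_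
      intro f v hf hlim
      obtain ⟨ns, hns, hae⟩ := (tendstoInMeasure_of_tendsto_Lp hlim).exists_seq_tendsto_ae
      obtain ⟨h1, h2⟩ := Jf_lim (n := n) hR hg hh (fun k => (hf (ns k)).1)
        (fun k => hmeas (f (ns k))) hae
      exact ⟨h1, le_of_tendsto' h2 fun k => (hf (ns k)).2⟩)
    (by
      refine ⟨-∫ r, C ∂ν, ?_⟩
      rintro _ ⟨v, hv, rfl⟩
      have h1 := norm_integral_le_of_norm_le (integrable_const C) (hC v hv (hmeas v))
      exact neg_le_of_neg_le ((neg_le_abs _).trans h1))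
  refine ⟨v, hv, hmeas v, fun w hw hwm => ?_⟩
  have hL := Adm_memLp hw hwm
  have := hmin hL.toLp (Adm_congr hL.coeFn_toLp.symm hw)
  rwa [Jf_congr hL.coeFn_toLp] at this

theorem main_pos (n : ℕ) (R : ℝ) (hR : 0 < R) (g h : ℝ → ℝ) (μ : ℝ → ℝ≥0∞)
    (hg1 : ConvexOn ℝ univ (fun z : ℝ => g |z|)) (hh1 : ConvexOn ℝ univ h)
    (l : ℝ) (hl : 0 ≤ l) (hA : ∀ x ≤ 0, h 0 ≤ h x) (hB : ∀ x, 0 ≤ x → h 0 - l * x ≤ h x)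
    (σ : ℝ) (hσ : 0 < σ) (hgσ : ∀ s, σ ≤ s → l * R / ((n:ℝ)+1) * (s - σ) ≤ g s - g σ) :
    ∃ ubar : RadW (n+1) R, memWmu (n+1) R μ ubar ∧
      ∀ u : RadW (n+1) R, memWmu (n+1) R μ u → Fcon (n+1) R g h ubar ≤ Fcon (n+1) R g h u := by
  have hg : Continuous fun z => g |z| :=
    continuousOn_univ.1 (hg1.continuousOn isOpen_univ)
  have hh : Continuous h := continuousOn_univ.1 (hh1.continuousOn isOpen_univ)
  have hg0 : ∀ z, 0 ≤ z → g 0 ≤ g z := by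
    intro z hz
    have := hg1.2 (mem_univ z) (mem_univ (-z)) (by norm_num : (0:ℝ) ≤ 1/2)
      (by norm_num : (0:ℝ) ≤ 1/2) (by norm_num)
    simp only [smul_eq_mul, abs_neg, abs_of_nonneg hz] at this
    rw [show (1/2 * z + 1/2 * -z : ℝ) = 0 by ring, abs_zero] at this
    linarith
  have hσR : 0 < σ * R := by positivity
  obtain ⟨a, ha, hamin⟩ := (isCompact_Icc (a := (0:ℝ)) (b := σ * R)).exists_isMinOn
    ⟨0, le_rfl, hσR.le⟩ hh.continuousOn
  have hamin' : ∀ x, 0 ≤ x → x ≤ σ * R → h a ≤ h x := fun x h1 h2 => hamin ⟨h1, h2⟩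
  have hax : ∀ x ≤ a, h a ≤ h x := by
    intro x hx
    rcases le_total 0 x with h0 | h0
    · exact hamin' x h0 (hx.trans ha.2)
    · exact (hamin' 0 le_rfl hσR.le).trans (hA x h0)
  have P1 : ∀ x y, x ≤ y → y ≤ a → h y ≤ h x := by
    intro x y hxy hya
    have := hh1.le_max_of_mem_Icc (mem_univ x) (mem_univ a) ⟨hxy, hya⟩
    rwa [max_eq_left (hax x (hxy.trans hya))] at this
  have P2 : a < σ * R → ∀ x, h a ≤ h x := by
    intro haA x
    rcases le_or_gt x (σ * R) with h0 | h0
    · rcases le_total x a with h1 | h1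
      · exact hax x h1
      · exact hamin' x (ha.1.trans h1) h0
    · have h1 := hh1.slope_mono_adjacent (mem_univ a) (mem_univ x) haA h0
      have h2 := hamin' (σ * R) hσR.le le_rfl
      have h3 : 0 ≤ (h x - h (σ * R)) / (x - σ * R) :=
        (div_nonneg (by linarith) (by linarith)).trans h1
      have h4 : 0 ≤ h x - h (σ * R) := by
        by_contra hcon
        exact absurd h3 (not_le.2 (div_neg_of_neg_of_pos (not_le.1 hcon) (by linarith)))
      linarith
  have P3 : ∀ t x, 0 ≤ t → t ≤ x → h t - l * (x - t) ≤ h x := by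
    intro t x ht htx
    rcases ht.eq_or_lt with rfl | ht
    · simpa using hB x htx
    rcases htx.eq_or_lt with rfl | htx
    · simp
    have h1 := hh1.slope_mono_adjacent (mem_univ 0) (mem_univ x) ht htx
    have h2 : -l ≤ (h t - h 0) / (t - 0) := by
      rw [le_div_iff₀ (by linarith)]; linarith [hB t ht.le]
    have h3 := h2.trans h1
    rw [le_div_iff₀ (by linarith)] at h3
    linarith
  obtain ⟨vb, hvb, hvbm, hmin⟩ := exists_min_adm n hR hg1 hh1 hg hh hσ.le ha.1 μ
  have hvbi := adm_int hvb hvbm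
  refine ⟨⟨fun r => ∫ ρ in Ioc r R, vb ρ, fun r => -vb r, ?_, ?_⟩, ?_, ?_⟩
  · simp only [abs_neg]
    refine Integrable.mono' (integrable_const (R ^ n * σ))
      (AEStronglyMeasurable.mul (by fun_prop) hvbm.norm) ?_
    filter_upwards [hvb.1, ae_restrict_mem measurableSet_Ioc] with r h1 hr
    have hr0 := hr.1
    rw [abs_of_nonneg h1.1, Real.norm_of_nonneg (mul_nonneg (by positivity) h1.1)]
    exact mul_le_mul (pow_le_pow_left₀ hr.1.le hr.2 n) h1.2.1 h1.1 (by positivity)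
  · intro r hr
    rw [integral_neg, neg_neg]
  · unfold memWmu
    filter_upwards [hvb.1] with r h1
    simp only [abs_neg, abs_of_nonneg h1.1]
    exact h1.2.2
  intro u hu
  -- the value at the minimizer
  have hval : ERInt (fun r : ℝ => r ^ n * (g |vb r| + h (∫ ρ in Ioc r R, vb ρ))) (Ioc 0 R)
      = ((Jf n R g h vb : ℝ) : EReal) :=
    ERInt_of_integrable _ _ (int_integrable hR hg hh hvb hvbm)
  have hgoal : Fcon (n+1) R g h u
      = ERInt (fun r : ℝ => r ^ n * (g |u.u' r| + h (u.u r))) (Ioc 0 R) := rfl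
  rw [hgoal]
  unfold Fcon
  simp only [abs_neg, Nat.add_sub_cancel]
  rw [hval]
  -- the competitor
  set f : ℝ → ℝ := fun r => |u.u' r| with hf
  set fs : ℝ → ℝ := fun r => min (f r) σ with hfs
  set d : ℝ → ℝ := fun r => f r - fs r with hd
  have hf0 : ∀ r, 0 ≤ f r := fun r => abs_nonneg _
  have hfs0 : ∀ r, 0 ≤ fs r := fun r => le_min (hf0 r) hσ.le
  have hd0 : ∀ r, 0 ≤ d r := fun r => sub_nonneg.2 (min_le_left _ _)
  have hdf : ∀ r, d r ≤ f r := fun r => sub_le_self _ (hfs0 r)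
  have hfi : IntegrableOn (fun r : ℝ => r ^ n * f r) (Ioc 0 R) := u.integ
  have hfm : AEStronglyMeasurable f (volume.restrict (Ioc (0:ℝ) R)) := by
    have h1 : AEStronglyMeasurable (fun r : ℝ => (r ^ n)⁻¹ * (r ^ n * f r))
        (volume.restrict (Ioc (0:ℝ) R)) :=
      AEStronglyMeasurable.mul (by fun_prop) hfi.1
    refine h1.congr ?_
    filter_upwards [ae_restrict_mem measurableSet_Ioc] with r hr
    have : r ^ n ≠ 0 := pow_ne_zero _ hr.1.ne'
    field_simp
  have hfsm : AEStronglyMeasurable fs (volume.restrict (Ioc (0:ℝ) R)) :=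
    (continuous_id.min continuous_const).comp_aestronglyMeasurable hfm
  have hdm : AEStronglyMeasurable d (volume.restrict (Ioc (0:ℝ) R)) := hfm.sub hfsm
  have hfsi : IntegrableOn fs (Ioc 0 R) := by
    refine Integrable.mono' (integrable_const σ) hfsm (ae_of_all _ fun r => ?_)
    rw [Real.norm_of_nonneg (hfs0 r)]; exact min_le_right _ _
  have hfir : ∀ r, 0 < r → IntegrableOn f (Ioc r R) := by
    intro r hr
    refine Integrable.mono' ((hfi.mono_set (Ioc_subset_Ioc_left hr.le)).const_mul (r ^ n)⁻¹)
      (hfm.mono_measure (Ioc_le_restrict hr.le)) ?_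
    filter_upwards [ae_restrict_mem measurableSet_Ioc] with x hx
    rw [Real.norm_of_nonneg (hf0 x), ← mul_assoc]
    refine le_mul_of_one_le_left (hf0 x) ?_
    rw [inv_mul_eq_div, one_le_div (by positivity)]
    exact pow_le_pow_left₀ hr.le hx.1.le n
  have hdi : IntegrableOn (fun r : ℝ => r ^ n * d r) (Ioc 0 R) := by
    refine Integrable.mono' hfi (AEStronglyMeasurable.mul (by fun_prop) hdm) ?_
    filter_upwards [ae_restrict_mem measurableSet_Ioc] with x hx
    have h1 := hd0 x
    have h2 := hx.1
    rw [Real.norm_of_nonneg (by positivity)]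
    exact mul_le_mul_of_nonneg_left (hdf x) (by positivity)
  set Y : ℝ → ℝ := fun r => ∫ ρ in Ioc r R, fs ρ with hY
  have hYc : ContinuousOn Y (Icc 0 R) := prim_cont hR hfsi
  have hYR : Y R = 0 := by simp [hY]
  have hY0 : Y 0 ≤ σ * R := by
    have : Y 0 ≤ ∫ ρ in Ioc 0 R, σ :=
      setIntegral_mono hfsi (integrable_const σ) fun x => min_le_right _ _
    refine this.trans_eq ?_
    simp [hR.le, mul_comm]
  have hYmono : ∀ r r', 0 ≤ r → r ≤ r' → Y r' ≤ Y r := by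
    intro r r' hr hrr
    refine setIntegral_mono_set (hfsi.mono_set (Ioc_subset_Ioc_left hr)) (ae_of_all _ hfs0) ?_
    exact (Ioc_subset_Ioc_left hrr).eventuallyLE
  obtain ⟨rs, hrs, hrsa, hrs2⟩ : ∃ rs ∈ Icc 0 R, Y rs ≤ a ∧ (rs = 0 ∨ (Y rs = a ∧ a < σ * R)) := by
    rcases le_or_gt (Y 0) a with h0 | h0
    · exact ⟨0, ⟨le_rfl, hR.le⟩, h0, Or.inl rfl⟩
    · obtain ⟨rs, h1, h2⟩ := intermediate_value_Icc' hR.le hYc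
        (show a ∈ Icc (Y R) (Y 0) from ⟨by rw [hYR]; exact ha.1, h0.le⟩)
      exact ⟨rs, h1, h2.le, Or.inr ⟨h2, h0.trans_le hY0⟩⟩
  set v : ℝ → ℝ := (Ioi rs).indicator fs with hv
  have hvm : AEStronglyMeasurable v (volume.restrict (Ioc (0:ℝ) R)) :=
    hfsm.indicator measurableSet_Ioi
  have hvfs : ∀ r, v r ≤ fs r := fun r => indicator_le_self' (fun _ _ => hfs0 _) r
  have hv0 : ∀ r, 0 ≤ v r := fun r => indicator_nonneg (fun _ _ => hfs0 _) r
  have hvY : ∀ r, ∫ ρ in Ioc r R, v ρ = Y (max r rs) := by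
    intro r
    rw [hv, setIntegral_indicator measurableSet_Ioi, Ioc_inter_Ioi]
  have hvadm : Adm R σ a μ v := by
    refine ⟨?_, ?_⟩
    · filter_upwards [hu] with r hr
      refine ⟨hv0 r, (hvfs r).trans (min_le_right _ _), ?_⟩
      exact (ENNReal.ofReal_le_ofReal ((hvfs r).trans (min_le_left _ _))).trans hr
    · rw [hvY, max_eq_right hrs.1]; exact hrsa
  have hJ := hmin v hvadm hvm
  obtain ⟨fu1, fu2, fu3⟩ := fub n R hR d hd0 hdi
  set q := l * R / ((n:ℝ)+1) with hq
  have hq0 : 0 ≤ q := by positivity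
  let D : ℝ → ℝ := fun r => q * (r ^ n * d r) - l * (r ^ n * ∫ ρ in Ioc r R, d ρ)
  have hDi : IntegrableOn D (Ioc 0 R) := (hdi.const_mul q).sub (fu1.const_mul l)
  have hD0 : 0 ≤ ∫ r in Ioc 0 R, D r := by
    simp only [D]
    rw [integral_sub (hdi.const_mul q) (fu1.const_mul l), integral_const_mul l, fu3,
      ← integral_const_mul l, ← integral_sub (hdi.const_mul q) (fu2.const_mul l)]
    refine setIntegral_nonneg measurableSet_Ioc fun r hr => ?_
    have h1 := hd0 r
    have h2 := hr.1
    have : q * (r ^ n * d r) - l * (r ^ (n+1) / ((n:ℝ)+1) * d r)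
        = l / ((n:ℝ)+1) * (r ^ n * d r) * (R - r) := by
      rw [hq]; field_simp; ring
    rw [this]
    exact mul_nonneg (by positivity) (by linarith [hr.2])
  have hvi := int_integrable (n := n) hR hg hh hvadm hvm
  have hψ : ERInt (fun r => r ^ n * (g |v r| + h (∫ ρ in Ioc r R, v ρ)) + D r) (Ioc 0 R)
      = ((Jf n R g h v + ∫ r in Ioc 0 R, D r : ℝ) : EReal) := by
    refine (ERInt_of_integrable _ _ (hvi.add hDi)).trans ?_
    exact congrArg _ (integral_add hvi hDi)
  have hstep : ((Jf n R g h vb : ℝ) : EReal) ≤ ((Jf n R g h v + ∫ r in Ioc 0 R, D r : ℝ) : EReal) :=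
    EReal.coe_le_coe_iff.2 (by linarith)
  refine hstep.trans (hψ.symm.le.trans (ERInt_mono_ae _ _ _ ?_))
  filter_upwards [ae_restrict_mem measurableSet_Ioc] with r hr
  have hux : u.u r ≤ ∫ ρ in Ioc r R, f ρ := by
    rw [u.rep r hr]
    exact (neg_le_abs _).trans (norm_integral_le_integral_norm (fun ρ => u.u' ρ))
  have hdY : ∫ ρ in Ioc r R, d ρ = (∫ ρ in Ioc r R, f ρ) - Y r :=
    integral_sub (hfir r hr.1) (hfsi.mono_set (Ioc_subset_Ioc_left hr.1.le))
  have hdr0 : 0 ≤ ∫ ρ in Ioc r R, d ρ := integral_nonneg hd0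
  have hgpart : g |v r| + q * d r ≤ g (f r) := by
    have h1 : g (fs r) + q * d r ≤ g (f r) := by
      rcases le_total (f r) σ with h0 | h0
      · simp [hd, hfs, min_eq_left h0]
      · have := hgσ (f r) h0
        simp only [hd, hfs, min_eq_right h0]
        linarith
    have h2 : g |v r| ≤ g (fs r) := by
      by_cases hm : r ∈ Ioi rs
      · rw [hv, indicator_of_mem hm, abs_of_nonneg (hfs0 r)]
      · rw [hv, indicator_of_notMem hm, abs_zero]; exact hg0 _ (hfs0 r)
    linarith
  have hhpart : h (∫ ρ in Ioc r R, v ρ) - l * (∫ ρ in Ioc r R, d ρ) ≤ h (u.u r) := by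
    have hld := mul_nonneg hl hdr0
    rw [hvY]
    rcases le_total rs r with h0 | h0
    · rw [max_eq_left h0]
      have hYa : Y r ≤ a := (hYmono rs r hrs.1 h0).trans hrsa
      have hYr0 : 0 ≤ Y r := integral_nonneg hfs0
      rcases le_total (u.u r) (Y r) with h1 | h1
      · linarith [P1 _ _ h1 hYa]
      · have h2 := P3 _ _ hYr0 h1
        have h3 : l * (u.u r - Y r) ≤ l * ∫ ρ in Ioc r R, d ρ :=
          mul_le_mul_of_nonneg_left (by rw [hdY]; linarith) hl
        linarith
    · rw [max_eq_right h0]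
      rcases hrs2 with h1 | ⟨h1, h2⟩
      · linarith [hr.1]
      · rw [h1]; linarith [P2 h2 (u.u r)]
  have hp : 0 ≤ r ^ n := pow_nonneg hr.1.le n
  calc _ = r ^ n * ((g |v r| + q * d r)
        + (h (∫ ρ in Ioc r R, v ρ) - l * (∫ ρ in Ioc r R, d ρ))) := by simp only [D]; ring
    _ ≤ _ := mul_le_mul_of_nonneg_left (add_le_add hgpart hhpart) hp

theorem exists_sigma (g : ℝ → ℝ) (hg1 : ConvexOn ℝ univ (fun z : ℝ => g |z|)) (q : ℝ)
    (hq : (q : EReal) < MconstE g) :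
    ∃ σ, 0 < σ ∧ ∀ s, σ ≤ s → q * (s - σ) ≤ g s - g σ := by
  obtain ⟨q', hq1, hq2⟩ := EReal.lt_iff_exists_real_btwn.1 hq
  have hqq : q < q' := EReal.coe_lt_coe_iff.1 hq1
  have hev := eventually_lt_of_lt_liminf hq2
  obtain ⟨σ, h1, h2⟩ := (hev.and (eventually_gt_atTop (max 0 (g 0 / (q' - q))))).exists
  have hσ : 0 < σ := (le_max_left _ _).trans_lt h2
  have hσ2 : g 0 / (q' - q) < σ := (le_max_right _ _).trans_lt h2
  rw [div_lt_iff₀ (by linarith)] at hσ2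
  rw [EReal.coe_lt_coe_iff, lt_div_iff₀ hσ] at h1
  refine ⟨σ, hσ, fun s hs => ?_⟩
  rcases hs.eq_or_lt with rfl | hs
  · simp
  have h3 := hg1.slope_mono_adjacent (mem_univ 0) (mem_univ s) hσ hs
  simp only [abs_zero, abs_of_pos hσ, abs_of_pos (hσ.trans hs)] at h3
  have h4 : q ≤ (g σ - g 0) / (σ - 0) := by
    rw [le_div_iff₀ (by linarith)]; nlinarith
  have h5 := h4.trans h3
  rwa [le_div_iff₀ (by linarith)] at h5

theorem bdd_facts (h : ℝ → ℝ) (hh1 : ConvexOn ℝ univ h) :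
    (∀ t, 0 < t → rightD h ≤ (h t - h 0) / t) ∧ (∀ t, t < 0 → (h t - h 0) / t ≤ leftD h) ∧
      leftD h ≤ rightD h := by
  have key : ∀ s t, s < 0 → 0 < t → (h s - h 0) / s ≤ (h t - h 0) / t := by
    intro s t hs ht
    have := hh1.slope_mono_adjacent (mem_univ s) (mem_univ t) hs ht
    rw [sub_zero, zero_sub] at this
    rwa [← neg_sub, neg_div_neg_eq] at this
  refine ⟨fun t ht => csInf_le ⟨(h (-1) - h 0) / (-1), ?_⟩ ⟨t, ht, rfl⟩,
    fun t ht => le_csSup ⟨(h 1 - h 0) / 1, ?_⟩ ⟨t, ht, rfl⟩, ?_⟩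
  · rintro _ ⟨s, hs, rfl⟩; exact key _ _ (by norm_num) hs
  · rintro _ ⟨s, hs, rfl⟩; exact key _ _ hs (by norm_num)
  · refine csSup_le (nonempty_Iio.image _) ?_
    rintro _ ⟨s, hs, rfl⟩
    refine le_csInf (nonempty_Ioi.image _) ?_
    rintro _ ⟨t, ht, rfl⟩
    exact key s t hs ht

def RadW.neg {N : ℕ} {R : ℝ} (u : RadW N R) : RadW N R where
  u := fun r => -u.u r
  u' := fun r => -u.u' r
  integ := by simpa only [abs_neg] using u.integ
  rep := by
    intro r hr
    rw [integral_neg, u.rep r hr]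

theorem memWmu_neg {N : ℕ} {R : ℝ} {μ : ℝ → ℝ≥0∞} (u : RadW N R) (hu : memWmu N R μ u) :
    memWmu N R μ u.neg := by
  unfold memWmu RadW.neg
  simp only [abs_neg]
  exact hu

theorem Fcon_neg {N : ℕ} {R : ℝ} (g h : ℝ → ℝ) (u : RadW N R) :
    Fcon N R g (fun x => h (-x)) u.neg = Fcon N R g h u := by
  unfold Fcon RadW.neg
  simp only [abs_neg, neg_neg]

/-- under (g1), (g2), (h1) and (hg), the constrained radial functional `F`
attains its minimum on `𝒲_μ`. (The condition (hg) `min{|h'₋(0)|,|h'₊(0)|} < N M / R` is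
written in the equivalent form `min{|h'₋(0)|,|h'₊(0)|} · R < N · M`, valid also when
`M = +∞`.) -/
theorem constrained_exists_minimizer (N : ℕ) (hN : 1 ≤ N) (R : ℝ) (hR : 0 < R)
    (g h : ℝ → ℝ) (μ : ℝ → ℝ≥0∞)
    (hg1 : ConvexOn ℝ univ (fun z : ℝ => g |z|))
    (hg2 : 0 < MconstE g)
    (hh1 : ConvexOn ℝ univ h)
    (hhg : ((min |leftD h| |rightD h| * R : ℝ) : EReal) < ((N : ℝ) : EReal) * MconstE g)
    (hμmono : MonotoneOn μ (Icc 0 R)) (hμpos : ∀ r ∈ Icc (0:ℝ) R, 0 < μ r) :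
    ∃ ubar : RadW N R, memWmu N R μ ubar ∧
      ∀ u : RadW N R, memWmu N R μ u → Fcon N R g h ubar ≤ Fcon N R g h u := by
  obtain ⟨n, rfl⟩ : ∃ n, N = n + 1 := ⟨N - 1, by omega⟩
  obtain ⟨hr, hl, hlr⟩ := bdd_facts h hh1
  have hsig : ∀ l : ℝ, l ≤ min |leftD h| |rightD h| →
      ∃ σ, 0 < σ ∧ ∀ s, σ ≤ s → l * R / ((n:ℝ)+1) * (s - σ) ≤ g s - g σ := by
    intro l hle
    refine exists_sigma g hg1 _ ?_
    by_contra hcon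
    rw [not_lt] at hcon
    have h1 : (((n+1 : ℕ) : ℝ) : EReal) * MconstE g
        ≤ (((n+1 : ℕ) : ℝ) : EReal) * ((l * R / ((n:ℝ)+1) : ℝ) : EReal) :=
      mul_le_mul_of_nonneg_left hcon (EReal.coe_nonneg.2 (by positivity))
    rw [← EReal.coe_mul] at h1
    have h2 := EReal.coe_lt_coe_iff.1 (hhg.trans_le h1)
    have h3 : (((n+1 : ℕ) : ℝ)) * (l * R / ((n:ℝ)+1)) = l * R := by
      push_cast; field_simp
    rw [h3] at h2
    exact absurd h2 (not_lt.2 (mul_le_mul_of_nonneg_right hle hR.le))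
  rcases le_or_gt (leftD h) 0 with hl0 | hl0
  · obtain ⟨σ, hσ, hgσ⟩ := hsig (max (-rightD h) 0) (by
      refine max_le (le_min ?_ (neg_le_abs _)) (le_min (abs_nonneg _) (abs_nonneg _))
      exact (neg_le_neg hlr).trans (neg_le_abs _))
    refine main_pos n R hR g h μ hg1 hh1 _ (le_max_right _ _) ?_ ?_ σ hσ hgσ
    · intro x hx
      rcases hx.eq_or_lt with rfl | hx
      · exact le_rfl
      have := (hl x hx).trans hl0
      rw [div_le_iff_of_neg hx] at this
      linarith
    · intro x hx
      rcases hx.eq_or_lt with rfl | hx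
      · simp
      have h1 := hr x hx
      have h2 := le_max_left (-rightD h) 0
      have h3 : -max (-rightD h) 0 ≤ (h x - h 0) / x := by linarith
      rw [le_div_iff₀ hx] at h3
      linarith
  · obtain ⟨σ, hσ, hgσ⟩ := hsig (leftD h) (by
      refine le_min (le_abs_self _) (hlr.trans (le_abs_self _)))
    have hconv : ConvexOn ℝ univ (fun x => h (-x)) := by
      refine ⟨convex_univ, fun x _ y _ α β hα hβ hab => ?_⟩
      have := hh1.2 (mem_univ (-x)) (mem_univ (-y)) hα hβ hab
      simp only [smul_eq_mul] at this ⊢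
      rwa [show -(α * x + β * y) = α * -x + β * -y by ring]
    obtain ⟨ub, h1, h2⟩ := main_pos n R hR g (fun x => h (-x)) μ hg1 hconv (leftD h) hl0.le
      (by
        intro x hx
        rcases hx.eq_or_lt with rfl | hx
        · exact le_rfl
        have := (hl0.le.trans hlr).trans (hr (-x) (by linarith))
        rw [le_div_iff₀ (by linarith)] at this
        simp only [neg_zero]
        linarith)
      (by
        intro x hx
        rcases hx.eq_or_lt with rfl | hx
        · simp
        have := hl (-x) (by linarith)
        rw [div_le_iff_of_neg (by linarith)] at this
        simp only [neg_zero]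
        linarith) σ hσ hgσ
    refine ⟨ub.neg, memWmu_neg ub h1, fun u hu => ?_⟩
    have h3 := h2 u.neg (memWmu_neg u hu)
    rw [Fcon_neg] at h3
    have h4 := Fcon_neg g (fun x => h (-x)) ub
    simp only [neg_neg] at h4
    rw [h4]
    exact h3
end
end

section
/- Under hypotheses (g1), (g2), (h1) and (hg), if moreover h′₊(0) ≥ 0, then there exists a minimizer ū of F on 𝒲_μ that is nondecreasing and convex on [0,R] (so that x ↦ ū(|x|) is a convex function on the ball B_R ⊂ ℝ^N). Symmetrically, if h′₋(0) ≤ 0 there exists a minimizer that is nonincreasing and concave. -/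
open MeasureTheory Set Filter
open scoped ENNReal

noncomputable section

open scoped Topology

/-- Helly selection. -/
lemma helly_sel (K : ℝ) (f : ℕ → ℝ → ℝ) (hmono : ∀ n, Monotone (f n))
    (hb : ∀ n x, f n x ∈ Icc 0 K) :
    ∃ φ : ℕ → ℕ, StrictMono φ ∧ ∃ p : ℝ → ℝ, Monotone p ∧ (∀ x, p x ∈ Icc 0 K) ∧
      ∀ᵐ x, Tendsto (fun n => f (φ n) x) atTop (𝓝 (p x)) := by
  have hc : IsCompact (Set.pi univ (fun _ : ℚ => Icc (0:ℝ) K)) :=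
    isCompact_univ_pi (fun _ => isCompact_Icc)
  obtain ⟨l, hl, φ, hφ, hlim⟩ := hc.tendsto_subseq (x := fun n (q : ℚ) => f n q)
    (fun n => fun q _ => hb n q)
  rw [tendsto_pi_nhds] at hlim
  have hl' : ∀ q, l q ∈ Icc 0 K := fun q => hl q (mem_univ _)
  have hq : ∀ q : ℚ, Tendsto (fun n => f (φ n) (q:ℝ)) atTop (𝓝 (l q)) := fun q => hlim q
  let S : ℝ → Set ℝ := fun r => l '' {q : ℚ | (q:ℝ) < r}
  have hS1 : ∀ r, (S r).Nonempty := fun r => by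
    obtain ⟨q, hq⟩ := exists_rat_lt r
    exact ⟨l q, q, hq, rfl⟩
  have hS2 : ∀ r, BddAbove (S r) := fun r => ⟨K, by rintro _ ⟨q, _, rfl⟩; exact (hl' q).2⟩
  have hpm : Monotone (fun r => sSup (S r)) := by
    intro r s hrs
    exact csSup_le_csSup (hS2 s) (hS1 r) (image_mono (fun q (hq : (q:ℝ) < r) => hq.trans_le hrs))
  refine ⟨φ, hφ, fun r => sSup (S r), hpm, ?_, ?_⟩
  · intro x
    refine ⟨?_, csSup_le (hS1 x) (by rintro _ ⟨q, _, rfl⟩; exact (hl' q).2)⟩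
    obtain ⟨_, q, hq, rfl⟩ := hS1 x
    exact (hl' q).1.trans (le_csSup (hS2 x) ⟨q, hq, rfl⟩)
  · have : ∀ᵐ x, ContinuousAt (fun r => sSup (S r)) x := by
      have := hpm.countable_not_continuousAt.ae_notMem (volume : Measure ℝ)
      filter_upwards [this] with x hx
      simpa using hx
    filter_upwards [this] with x hx
    rw [tendsto_order]
    constructor
    · intro a ha
      obtain ⟨_, ⟨q, hqx, rfl⟩, haq⟩ := exists_lt_of_lt_csSup (hS1 x) ha
      filter_upwards [(hq q).eventually_const_lt haq] with n hn
      exact hn.trans_le (hmono _ (le_of_lt hqx))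
    · intro b hb'
      have h1 : ∀ᶠ y in 𝓝 x, sSup (S y) < b := hx.eventually_lt_const hb'
      obtain ⟨y, hy1, hy2⟩ := ((h1.filter_mono nhdsWithin_le_nhds).and
        (self_mem_nhdsWithin (a := x) (s := Ioi x))).exists
      obtain ⟨q, hxq, hqy⟩ := exists_rat_btwn (show x < y from hy2)
      have : l q < b := (le_csSup (hS2 y) ⟨q, hqy, rfl⟩).trans_lt hy1
      filter_upwards [(hq q).eventually_lt_const this] with n hn
      exact (hmono _ hxq.le).trans_lt hn

/-- tail primitive -/
def PP (R : ℝ) (q : ℝ → ℝ) (r : ℝ) : ℝ := ∫ ρ in Ioc r R, q ρ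

lemma aesm_of_weight {N : ℕ} {R : ℝ} {d : ℝ → ℝ}
    (hd : AEStronglyMeasurable (fun r => r ^ (N-1) * d r) (volume.restrict (Ioc 0 R))) :
    AEStronglyMeasurable d (volume.restrict (Ioc 0 R)) := by
  have h1 : AEStronglyMeasurable (fun r : ℝ => (r ^ (N-1))⁻¹ * (r ^ (N-1) * d r))
      (volume.restrict (Ioc 0 R)) := by
    refine AEStronglyMeasurable.mul ?_ hd
    exact (Measurable.inv (by fun_prop)).aestronglyMeasurable
  refine h1.congr ?_
  filter_upwards [ae_restrict_mem measurableSet_Ioc] with r hr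
  have : r ^ (N-1) ≠ 0 := (pow_pos hr.1 _).ne'
  field_simp

lemma fubini_tail (N : ℕ) (R : ℝ) (d ψ : ℝ → ℝ) (B : ℝ)
    (hd : IntegrableOn (fun r => r ^ (N-1) * d r) (Ioc 0 R))
    (hψm : AEStronglyMeasurable ψ (volume.restrict (Ioc 0 R)))
    (hψ : ∀ r, |ψ r| ≤ B) :
    IntegrableOn (fun r => r ^ (N-1) * ψ r * PP R d r) (Ioc 0 R) ∧
    ∫ r in Ioc 0 R, r ^ (N-1) * ψ r * PP R d r =
      ∫ ρ in Ioc 0 R, d ρ * ∫ r in Ioc 0 ρ, r ^ (N-1) * ψ r := by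
  have hdm := aesm_of_weight hd.aestronglyMeasurable
  set ν := volume.restrict (Ioc (0:ℝ) R) with hν
  let f : ℝ → ℝ → ℝ := fun r ρ => (r ^ (N-1) * ψ r) * (if r < ρ then d ρ else 0)
  have hset : MeasurableSet {z : ℝ × ℝ | z.1 < z.2} := measurableSet_lt measurable_fst measurable_snd
  have hm : AEStronglyMeasurable (Function.uncurry f) (ν.prod ν) := by
    have e : Function.uncurry f = fun z : ℝ × ℝ => (z.1 ^ (N-1) * ψ z.1) *
        ({z : ℝ × ℝ | z.1 < z.2}.indicator (fun z => d z.2) z) := by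
      ext z; simp [f, Function.uncurry, indicator]
    rw [e]
    refine AEStronglyMeasurable.mul (AEStronglyMeasurable.mul ?_ ?_) ?_
    · exact (Measurable.aestronglyMeasurable (by fun_prop))
    · exact hψm.comp_fst
    · exact (hdm.comp_snd).indicator hset
  have hmem : ∀ᵐ z ∂(ν.prod ν), z.1 ∈ Ioc 0 R ∧ z.2 ∈ Ioc 0 R := by
    rw [hν, Measure.prod_restrict]
    filter_upwards [ae_restrict_mem (measurableSet_Ioc.prod measurableSet_Ioc)] with z hz
    exact hz
  have hint : Integrable (Function.uncurry f) (ν.prod ν) := by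
    have h1 : Integrable (fun z : ℝ × ℝ => B * (z.2 ^ (N-1) * |d z.2|)) (ν.prod ν) := by
      have : Integrable (fun z : ℝ × ℝ => B * (z.2^(N-1) * d z.2)) (ν.prod ν) :=
        Integrable.mul_prod (f := fun _ => B) (g := fun r => r ^ (N-1) * d r)
          (integrable_const B) hd
      have h2 := this.norm
      refine h2.congr ?_
      filter_upwards [hmem] with z hz
      have hB : 0 ≤ B := (abs_nonneg _).trans (hψ 0)
      have : 0 ≤ z.2 ^ (N-1) := pow_nonneg hz.2.1.le _
      simp [abs_of_nonneg hB, abs_of_pos hz.2.1]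
    refine h1.mono' hm ?_
    filter_upwards [hmem] with z hz
    have hB : 0 ≤ B := (abs_nonneg _).trans (hψ 0)
    have h0 : 0 ≤ z.2 ^ (N-1) := pow_nonneg hz.2.1.le _
    have h0' : 0 ≤ z.1 ^ (N-1) := pow_nonneg hz.1.1.le _
    simp only [Function.uncurry, f]
    split_ifs with hlt
    · rw [Real.norm_eq_abs, abs_mul, abs_mul, abs_of_nonneg h0']
      have h3 : z.1 ^ (N-1) ≤ z.2 ^ (N-1) := pow_le_pow_left₀ hz.1.1.le hlt.le _
      have h4 := hψ z.1
      calc z.1 ^ (N-1) * |ψ z.1| * |d z.2| ≤ z.2 ^ (N-1) * B * |d z.2| := by gcongr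
        _ = _ := by ring
    · simp; positivity
  have hA : ∀ r ∈ Ioc (0:ℝ) R, ∫ ρ, f r ρ ∂ν = r ^ (N-1) * ψ r * PP R d r := by
    intro r hr
    simp only [f]
    rw [integral_const_mul]
    congr 1
    have : (fun ρ => if r < ρ then d ρ else 0) = (Ioi r).indicator d := by
      ext ρ; simp [indicator]
    rw [this, integral_indicator measurableSet_Ioi, hν, Measure.restrict_restrict measurableSet_Ioi,
      PP]
    congr 2
    ext x; simp only [mem_inter_iff, mem_Ioi, mem_Ioc]
    exact ⟨fun h => ⟨h.1, h.2.2⟩, fun h => ⟨h.1, hr.1.trans h.1, h.2⟩⟩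
  have hB' : ∀ ρ ∈ Ioc (0:ℝ) R, ∫ r, f r ρ ∂ν = d ρ * ∫ r in Ioc 0 ρ, r ^ (N-1) * ψ r := by
    intro ρ hρ
    have : (fun r => f r ρ) = fun r => d ρ * (Iio ρ).indicator (fun r => r ^ (N-1) * ψ r) r := by
      ext r; simp only [f, indicator, mem_Iio]; split_ifs <;> ring
    rw [this, integral_const_mul, integral_indicator measurableSet_Iio, hν,
      Measure.restrict_restrict measurableSet_Iio]
    congr 1
    have e : Iio ρ ∩ Ioc 0 R = Ioo 0 ρ := by
      ext x; simp only [mem_inter_iff, mem_Iio, mem_Ioc, mem_Ioo]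
      exact ⟨fun h => ⟨h.2.1, h.1⟩, fun h => ⟨h.2, h.1, h.2.le.trans hρ.2⟩⟩
    rw [e, integral_Ioc_eq_integral_Ioo]
  constructor
  · refine (hint.integral_prod_left).congr ?_
    filter_upwards [ae_restrict_mem measurableSet_Ioc] with r hr using hA r hr
  · rw [← setIntegral_congr_fun measurableSet_Ioc hA, integral_integral_swap hint]
    exact setIntegral_congr_fun measurableSet_Ioc hB'

lemma mono_test (R : ℝ) (f φ : ℝ → ℝ) (B : ℝ) (hf : IntegrableOn f (Ioc 0 R))
    (htail : ∀ s ∈ Icc 0 R, 0 ≤ ∫ x in Ioc s R, f x)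
    (hφ : MonotoneOn φ (Ioc 0 R)) (hφb : ∀ r ∈ Ioc 0 R, φ r ∈ Icc 0 B) :
    0 ≤ ∫ x in Ioc 0 R, f x * φ x := by
  have hφm : AEMeasurable φ (volume.restrict (Ioc 0 R)) :=
    aemeasurable_restrict_of_monotoneOn measurableSet_Ioc hφ
  set ν := volume.restrict (Ioc (0:ℝ) R) with hν
  set τ := volume.restrict (Ioc (0:ℝ) B) with hτ
  let F : ℝ → ℝ → ℝ := fun x t => if t < φ x then f x else 0
  have hset : NullMeasurableSet {z : ℝ × ℝ | z.2 < φ z.1} (ν.prod τ) :=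
    nullMeasurableSet_lt measurable_snd.aemeasurable hφm.comp_fst
  have hint : Integrable (Function.uncurry F) (ν.prod τ) := by
    have e : Function.uncurry F = {z : ℝ × ℝ | z.2 < φ z.1}.indicator (fun z => f z.1) := by
      ext z; simp [F, Function.uncurry, indicator]
    rw [e]
    have h1 : Integrable (fun z : ℝ × ℝ => f z.1 * 1) (ν.prod τ) :=
      Integrable.mul_prod (f := f) (g := fun _ => (1:ℝ)) hf (integrable_const _)
    simp only [mul_one] at h1
    exact h1.indicator₀ hset
  have hA : ∀ x ∈ Ioc (0:ℝ) R, ∫ t, F x t ∂τ = f x * φ x := by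
    intro x hx
    have h1 : (fun t => F x t) = fun t => (Iio (φ x)).indicator (fun _ => f x) t := by
      ext t; simp [F, indicator]
    rw [h1, integral_indicator measurableSet_Iio, hτ, Measure.restrict_restrict measurableSet_Iio]
    have e : Iio (φ x) ∩ Ioc 0 B = Ioo 0 (φ x) := by
      ext t; simp only [mem_inter_iff, mem_Iio, mem_Ioc, mem_Ioo]
      exact ⟨fun h => ⟨h.2.1, h.1⟩, fun h => ⟨h.2, h.1, h.2.le.trans (hφb x hx).2⟩⟩
    rw [e]
    simp [(hφb x hx).1, mul_comm]
  rw [← setIntegral_congr_fun measurableSet_Ioc hA, integral_integral_swap hint]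
  refine integral_nonneg (fun t => ?_)
  have h1 : (fun x => F x t) = fun x => {x | t < φ x}.indicator f x := by
    ext t; simp [F, indicator]
  -- up-set
  let T : Set ℝ := {x | x ∈ Ioc 0 R ∧ t < φ x}
  by_cases hT : T.Nonempty
  · have hTb : BddBelow T := ⟨0, fun x hx => hx.1.1.le⟩
    obtain ⟨x0, hx0⟩ := hT
    have hs0 : 0 ≤ sInf T := le_csInf ⟨x0, hx0⟩ (fun x hx => hx.1.1.le)
    have hsR : sInf T ≤ R := (csInf_le hTb hx0).trans hx0.1.2
    have hae : (fun x => F x t) =ᵐ[ν] (Ioc (sInf T) R).indicator f := by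
      have hne : ∀ᵐ x ∂ν, x ≠ sInf T := by
        refine ae_restrict_of_ae ?_
        exact (Set.countable_singleton (sInf T)).ae_notMem volume
      filter_upwards [hne, ae_restrict_mem measurableSet_Ioc] with x hx1 hx2
      simp only [F, indicator]
      by_cases hlt : sInf T < x
      · obtain ⟨y, hy, hyx⟩ := (csInf_lt_iff hTb ⟨x0, hx0⟩).1 hlt
        have : t < φ x := hy.2.trans_le (hφ hy.1 hx2 hyx.le)
        simp [this, hlt, hx2.2]
      · have : ¬ t < φ x := fun h => by
          have := csInf_le hTb (show x ∈ T from ⟨hx2, h⟩)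
          exact hlt (lt_of_le_of_ne this (Ne.symm hx1))
        simp [this, hlt]
    show (0:ℝ) ≤ ∫ x, F x t ∂ν
    rw [integral_congr_ae hae, integral_indicator measurableSet_Ioc, hν,
      Measure.restrict_restrict measurableSet_Ioc,
      inter_eq_left.2 (Ioc_subset_Ioc_left hs0)]
    exact htail _ ⟨hs0, hsR⟩
  · have : (fun x => F x t) =ᵐ[ν] 0 := by
      filter_upwards [ae_restrict_mem measurableSet_Ioc] with x hx
      have : ¬ t < φ x := fun h => hT ⟨x, hx, h⟩
      simp [F, this]
    show (0:ℝ) ≤ ∫ x, F x t ∂ν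
    rw [integral_congr_ae this]; simp

lemma lam_mono (N : ℕ) (R B : ℝ) (ψ : ℝ → ℝ) (hψ : Monotone ψ) 
    (hb : ∀ r, ψ r ∈ Icc 0 B) :
    MonotoneOn (fun ρ : ℝ => (∫ r in Ioc 0 ρ, r ^ (N-1) * ψ r) / ρ ^ (N-1)) (Ioc 0 R) ∧
    ∀ ρ ∈ Ioc 0 R, (∫ r in Ioc 0 ρ, r ^ (N-1) * ψ r) / ρ ^ (N-1) ∈ Icc 0 (R * B) := by
  have key : ∀ ρ : ℝ, 0 < ρ → (∫ r in Ioc 0 ρ, r ^ (N-1) * ψ r) / ρ ^ (N-1) =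
      ρ * ∫ t in Ioc 0 1, t ^ (N-1) * ψ (ρ * t) := by
    intro ρ hρ
    rw [← intervalIntegral.integral_of_le hρ.le, ← intervalIntegral.integral_of_le zero_le_one]
    have h := intervalIntegral.mul_integral_comp_mul_left (a := 0) (b := 1)
      (f := fun r => r ^ (N-1) * ψ r) (c := ρ)
    simp only [mul_zero, mul_one] at h
    rw [← h]
    have : ∀ x : ℝ, (ρ * x) ^ (N-1) * ψ (ρ * x) = ρ ^ (N-1) * (x ^ (N-1) * ψ (ρ * x)) := by
      intro x; ring
    simp only [this]
    rw [intervalIntegral.integral_const_mul]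
    have : ρ ^ (N-1) ≠ 0 := (pow_pos hρ _).ne'
    field_simp
  have hi : ∀ ρ : ℝ, 0 < ρ → IntegrableOn (fun t => t ^ (N-1) * ψ (ρ * t)) (Ioc 0 1) := by
    intro ρ hρ
    refine Measure.integrableOn_of_bounded (M := B) (by simp) ?_ ?_
    · exact ((measurable_id.pow_const _).mul
        (hψ.measurable.comp (measurable_const_mul ρ))).aestronglyMeasurable
    · filter_upwards [ae_restrict_mem measurableSet_Ioc] with t ht
      have h1 : t ^ (N-1) ≤ 1 := pow_le_one₀ ht.1.le ht.2
      have h0 : 0 ≤ t ^ (N-1) := pow_nonneg ht.1.le _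
      have h2 := hb (ρ * t)
      rw [Real.norm_eq_abs, abs_of_nonneg (mul_nonneg h0 h2.1)]
      nlinarith [h2.1, h2.2]
  have hB : 0 ≤ B := (hb 0).1.trans (hb 0).2
  have hnn : ∀ ρ : ℝ, 0 < ρ → 0 ≤ ∫ t in Ioc 0 1, t ^ (N-1) * ψ (ρ * t) := fun ρ hρ =>
    setIntegral_nonneg measurableSet_Ioc
      (fun t ht => mul_nonneg (pow_nonneg ht.1.le _) (hb _).1)
  constructor
  · intro a ha b hb' hab
    simp only
    rw [key a ha.1, key b hb'.1]
    refine mul_le_mul hab ?_ (hnn a ha.1) hb'.1.le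
    refine setIntegral_mono_on (hi a ha.1) (hi b hb'.1) measurableSet_Ioc (fun t ht => ?_)
    exact mul_le_mul_of_nonneg_left (hψ (mul_le_mul_of_nonneg_right hab ht.1.le))
      (pow_nonneg ht.1.le _)
  · intro ρ hρ
    rw [key ρ hρ.1]
    refine ⟨mul_nonneg hρ.1.le (hnn ρ hρ.1), mul_le_mul hρ.2 ?_ (hnn ρ hρ.1) (hρ.1.le.trans hρ.2)⟩
    calc ∫ t in Ioc 0 1, t ^ (N-1) * ψ (ρ * t) ≤ ∫ t in Ioc (0:ℝ) 1, B := by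
          refine setIntegral_mono_on (hi ρ hρ.1) (by simp) measurableSet_Ioc (fun t ht => ?_)
          have h1 : t ^ (N-1) ≤ 1 := pow_le_one₀ ht.1.le ht.2
          have h0 : 0 ≤ t ^ (N-1) := pow_nonneg ht.1.le _
          have h2 := hb (ρ * t)
          nlinarith [h2.1, h2.2]
      _ = B := by simp

/-- weighted measure -/
def mw (N : ℕ) (R : ℝ) : Measure ℝ :=
  (volume.restrict (Ioc 0 R)).withDensity (fun r => ENNReal.ofReal (r ^ (N-1)))

lemma mw_integral (N : ℕ) (R : ℝ) (f : ℝ → ℝ) :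
    ∫ x, f x ∂(mw N R) = ∫ r in Ioc 0 R, r ^ (N-1) * f r := by
  rw [mw, integral_withDensity_eq_integral_toReal_smul (by fun_prop) (by simp)]
  refine setIntegral_congr_fun measurableSet_Ioc (fun r hr => ?_)
  simp [ENNReal.toReal_ofReal (pow_nonneg hr.1.le (N-1))]

lemma mw_Ioc (N : ℕ) (hN : 1 ≤ N) (R r : ℝ) (hr : r ∈ Icc 0 R) :
    mw N R (Ioc 0 r) = ENNReal.ofReal (r ^ N / N) := by
  rw [mw, withDensity_apply _ measurableSet_Ioc, Measure.restrict_restrict measurableSet_Ioc,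
    inter_eq_left.2 (Ioc_subset_Ioc_right hr.2), ← ofReal_integral_eq_lintegral_ofReal]
  · rw [← intervalIntegral.integral_of_le hr.1, integral_pow]
    congr 1
    have h1 : N - 1 + 1 = N := Nat.sub_add_cancel hN
    have h2 : ((N - 1 : ℕ) : ℝ) + 1 = N := by exact_mod_cast h1
    rw [h1, h2, zero_pow (by omega)]; simp
  · exact (continuous_pow _).integrableOn_Ioc
  · filter_upwards [ae_restrict_mem measurableSet_Ioc] with x hx
    exact pow_nonneg hx.1.le _

lemma mw_ac (N : ℕ) (R : ℝ) : mw N R ≪ volume.restrict (Ioc 0 R) :=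
  withDensity_absolutelyContinuous _ _

lemma mw_mem (N : ℕ) (R : ℝ) : ∀ᵐ x ∂(mw N R), x ∈ Ioc 0 R :=
  (mw_ac N R).ae_le (ae_restrict_mem measurableSet_Ioc)

lemma mw_univ (N : ℕ) (hN : 1 ≤ N) (R : ℝ) (hR : 0 < R) :
    mw N R univ = ENNReal.ofReal (R ^ N / N) := by
  rw [← mw_Ioc N hN R R ⟨hR.le, le_rfl⟩]
  refine measure_congr ?_
  filter_upwards [mw_mem N R] with x hx
  exact propext (iff_of_true trivial hx)

lemma rearr (N : ℕ) (hN : 1 ≤ N) (R : ℝ) (hR : 0 < R) (K : ℝ) (q : ℝ → ℝ)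
    (hq : AEMeasurable q (volume.restrict (Ioc 0 R)))
    (hqb : ∀ᵐ x ∂(volume.restrict (Ioc 0 R)), q x ∈ Icc 0 K) (hK : 0 ≤ K) :
    ∃ p : ℝ → ℝ, Monotone p ∧ (∀ x, p x ∈ Icc 0 K) ∧
      (∀ r ∈ Ioc 0 R, ∀ t ∈ Icc 0 K,
        (∀ᵐ x ∂(volume.restrict (Ioc 0 R)), x ≤ r → q x ≤ t) → p r ≤ t) ∧
      (mw N R).map p = (mw N R).map q := by
  have hqm : AEMeasurable q (mw N R) := hq.mono_ac (mw_ac N R)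
  have hqb' : ∀ᵐ x ∂(mw N R), q x ∈ Icc 0 K := (mw_ac N R).ae_le hqb
  have : IsFiniteMeasure (mw N R) := ⟨by rw [mw_univ N hN R hR]; exact ENNReal.ofReal_lt_top⟩
  have hN0 : (0:ℝ) < N := by exact_mod_cast hN
  set α := (mw N R).map q with hα
  have hαI : ∀ t, α (Iic t) = mw N R {x | q x ≤ t} := fun t => by
    rw [hα, Measure.map_apply_of_aemeasurable hqm measurableSet_Iic]; rfl
  have hαK : ∀ t, K ≤ t → α (Iic t) = mw N R univ := fun t ht => by
    rw [hαI]
    refine measure_congr ?_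
    filter_upwards [hqb'] with x hx
    exact propext (iff_of_true (hx.2.trans ht) trivial)
  have hα0 : ∀ t, t < 0 → α (Iic t) = 0 := fun t ht => by
    rw [hαI]
    refine measure_eq_zero_iff_ae_notMem.2 ?_
    filter_upwards [hqb'] with x hx
    exact not_le.2 (ht.trans_le hx.1)
  let V : ℝ → ℝ := fun r => (max 0 (min r R)) ^ N / N
  have hVm : Monotone V := fun a b hab => by
    simp only [V]; gcongr
  have hV : ∀ r ∈ Icc 0 R, V r = r ^ N / N := fun r hr => by
    simp only [V, min_eq_left hr.2, max_eq_right hr.1]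
  let S : ℝ → Set ℝ := fun r => {t | t ∈ Icc 0 K ∧ ENNReal.ofReal (V r) ≤ α (Iic t)}
  have hKS : ∀ r, K ∈ S r := fun r => by
    refine ⟨⟨hK, le_rfl⟩, ?_⟩
    rw [hαK K le_rfl, mw_univ N hN R hR]
    refine ENNReal.ofReal_le_ofReal ?_
    simp only [V]
    gcongr
    exact max_le hR.le (min_le_right _ _)
  have hSb : ∀ r, BddBelow (S r) := fun r => ⟨0, fun t ht => ht.1.1⟩
  have key : ∀ r, ∀ t ∈ Icc 0 K, (sInf (S r) ≤ t ↔ ENNReal.ofReal (V r) ≤ α (Iic t)) := by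
    intro r t ht
    constructor
    · intro h
      have hlim := tendsto_measure_biInter_gt (μ := α) (s := fun s : ℝ => Iic s) (a := t)
        (fun _ _ => measurableSet_Iic.nullMeasurableSet)
        (fun i j _ hij => Iic_subset_Iic.2 hij) ⟨t + 1, by simp, measure_ne_top _ _⟩
      have e : ⋂ r > t, Iic r = Iic t := by
        ext x; simp only [mem_iInter, mem_Iic]
        exact ⟨fun h => le_of_forall_gt_imp_ge_of_dense h, fun h s hs => h.trans (le_of_lt hs)⟩
      rw [e] at hlim
      refine ge_of_tendsto hlim ?_
      filter_upwards [self_mem_nhdsWithin] with s hs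
      obtain ⟨s', hs', hlt⟩ := (csInf_lt_iff (hSb r) ⟨K, hKS r⟩).1 (h.trans_lt hs)
      exact hs'.2.trans (measure_mono (Iic_subset_Iic.2 hlt.le))
    · intro h
      exact csInf_le (hSb r) ⟨ht, h⟩
  have hpm : Monotone (fun r => sInf (S r)) := fun a b hab =>
    csInf_le_csInf (hSb a) ⟨K, hKS b⟩ (fun t ht => ⟨ht.1,
      (ENNReal.ofReal_le_ofReal (hVm hab)).trans ht.2⟩)
  have hpb : ∀ x, sInf (S x) ∈ Icc 0 K := fun x =>
    ⟨le_csInf ⟨K, hKS x⟩ (fun t ht => ht.1.1), csInf_le (hSb x) (hKS x)⟩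
  refine ⟨fun r => sInf (S r), hpm, hpb, ?_, ?_⟩
  · intro r hr t ht h
    refine (key r t ht).2 ?_
    rw [hV r ⟨hr.1.le, hr.2⟩, ← mw_Ioc N hN R r ⟨hr.1.le, hr.2⟩, hαI]
    refine measure_mono_ae ?_
    filter_upwards [(mw_ac N R).ae_le h] with x hx
    exact fun hx' => hx hx'.2
  · refine Measure.ext_of_Iic _ _ (fun t => ?_)
    rw [Measure.map_apply hpm.measurable measurableSet_Iic]
    rcases lt_or_ge t 0 with ht0 | ht0
    · rw [hα0 t ht0]
      convert measure_empty (μ := mw N R)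
      ext x; simp only [mem_preimage, mem_Iic, mem_empty_iff_false, iff_false, not_le]
      exact ht0.trans_le (hpb x).1
    rcases le_or_gt K t with htK | htK
    · rw [hαK t htK]
      congr 1
      ext x; simp only [mem_preimage, mem_Iic, mem_univ, iff_true]
      exact (hpb x).2.trans htK
    have ht : t ∈ Icc 0 K := ⟨ht0, htK.le⟩
    have hle : α (Iic t) ≤ ENNReal.ofReal (R ^ N / N) := by
      rw [← mw_univ N hN R hR, hαI]; exact measure_mono (subset_univ _)
    have hfin : α (Iic t) ≠ ∞ := measure_ne_top _ _
    obtain ⟨r0, hr0, hr0e⟩ : ∃ r0 ∈ Icc 0 R, r0 ^ N / N = (α (Iic t)).toReal := by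
      have hc : ContinuousOn (fun r : ℝ => r ^ N / N) (Icc 0 R) := by fun_prop
      have := intermediate_value_Icc hR.le hc
      refine this ⟨?_, ?_⟩
      · simp only [zero_pow (by omega : N ≠ 0), zero_div]; exact ENNReal.toReal_nonneg
      · exact ENNReal.toReal_le_of_le_ofReal (by positivity) hle
    have e0 : α (Iic t) = ENNReal.ofReal (r0 ^ N / N) := by
      rw [hr0e, ENNReal.ofReal_toReal hfin]
    rw [e0, ← mw_Ioc N hN R r0 hr0]
    refine measure_congr ?_
    filter_upwards [mw_mem N R] with x hx
    have : sInf (S x) ≤ t ↔ x ∈ Ioc 0 r0 := by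
      rw [key x t ht, e0, hV x ⟨hx.1.le, hx.2⟩, ENNReal.ofReal_le_ofReal_iff
        (div_nonneg (pow_nonneg hr0.1 _) hN0.le), div_le_div_iff_of_pos_right hN0,
        pow_le_pow_iff_left₀ hx.1.le hr0.1 (by omega)]
      exact ⟨fun h => ⟨hx.1, h⟩, fun h => h.2⟩
    exact propext this

/-- reduced functional -/
def GG (N : ℕ) (R : ℝ) (γ k : ℝ → ℝ) (q : ℝ → ℝ) : ℝ :=
  ∫ r in Ioc 0 R, r ^ (N-1) * (γ (q r) + k (-(PP R q r)))

lemma exists_subgrad (k : ℝ → ℝ) (hk : ConvexOn ℝ univ k) (hm : Monotone k) :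
    ∃ s : ℝ → ℝ, Monotone s ∧ (∀ x, 0 ≤ s x) ∧ ∀ x y, k x + s x * (y - x) ≤ k y := by
  have key : ∀ x y, k x + derivWithin k (Ioi x) x * (y - x) ≤ k y := by
    intro x y
    rcases lt_trichotomy x y with h | h | h
    · have := hk.rightDeriv_le_slope_of_mem_interior (x := x) (y := y) (by simp) (by simp) h
      rw [slope_def_field, le_div_iff₀ (sub_pos.2 h)] at this
      linarith
    · subst h; simp
    · have h1 := hk.slope_le_leftDeriv_of_mem_interior (x := y) (y := x) (by simp) (by simp) h
      have h2 := hk.leftDeriv_le_rightDeriv_of_mem_interior (x := x) (by simp)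
      have := h1.trans h2
      rw [slope_def_field, div_le_iff₀ (sub_pos.2 h)] at this
      linarith
  refine ⟨fun x => derivWithin k (Ioi x) x, ?_, ?_, key⟩
  · have := hk.monotoneOn_rightDeriv
    rw [interior_univ] at this
    exact monotoneOn_univ.1 this
  · intro x
    have h1 := key x (x - 1)
    have h2 := hm (show x - 1 ≤ x by linarith)
    linarith

lemma wint (N : ℕ) (R : ℝ) (f : ℝ → ℝ) (C : ℝ)
    (hm : AEStronglyMeasurable f (volume.restrict (Ioc 0 R)))
    (hb : ∀ r ∈ Ioc 0 R, |f r| ≤ C) : IntegrableOn (fun r => r ^ (N-1) * f r) (Ioc 0 R) := by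
  refine Integrable.of_bound (C := R ^ (N-1) * C) ?_ ?_
  · exact AEStronglyMeasurable.mul (Measurable.aestronglyMeasurable (by fun_prop)) hm
  · filter_upwards [ae_restrict_mem measurableSet_Ioc] with r hr
    rw [Real.norm_eq_abs, abs_mul, abs_of_nonneg (pow_nonneg hr.1.le _)]
    exact mul_le_mul (pow_le_pow_left₀ hr.1.le hr.2 _) (hb r hr) (abs_nonneg _)
      (pow_nonneg (hr.1.le.trans hr.2) _)

section adm
variable {N : ℕ} {R K : ℝ} {q : ℝ → ℝ}

lemma adm_int_s12 (hq : AEMeasurable q (volume.restrict (Ioc 0 R))) (hqb : ∀ x, q x ∈ Icc 0 K) :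
    IntegrableOn q (Ioc 0 R) := by
  refine Integrable.of_bound (C := K) hq.aestronglyMeasurable ?_
  filter_upwards with r
  rw [Real.norm_eq_abs, abs_of_nonneg (hqb r).1]; exact (hqb r).2

lemma PP_anti (hqi : IntegrableOn q (Ioc 0 R)) (hq0 : ∀ x, 0 ≤ q x) :
    AntitoneOn (PP R q) (Ici 0) := by
  intro a ha b hb hab
  refine setIntegral_mono_set (hqi.mono_set (Ioc_subset_Ioc_left ha)) ?_ ?_
  · filter_upwards with x using hq0 x
  · exact (Ioc_subset_Ioc_left hab).eventuallyLE

lemma PP_nonneg (hq0 : ∀ x, 0 ≤ q x) (r : ℝ) : 0 ≤ PP R q r :=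
  integral_nonneg (fun x => hq0 x)

lemma PP_le (hq : AEMeasurable q (volume.restrict (Ioc 0 R))) (hqb : ∀ x, q x ∈ Icc 0 K)
    {r : ℝ} (hr : r ∈ Ioc 0 R) : PP R q r ≤ R * K := by
  have hK : 0 ≤ K := (hqb 0).1.trans (hqb 0).2
  calc PP R q r ≤ ∫ x in Ioc r R, K := by
        refine setIntegral_mono ((adm_int_s12 hq hqb).mono_set (Ioc_subset_Ioc_left hr.1.le)) (by simp)
          (fun x => (hqb x).2)
    _ = (R - r) * K := by simp [hr.2]
    _ ≤ R * K := by
        apply mul_le_mul_of_nonneg_right _ hK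
        linarith [hr.1]

lemma PP_aesm (hqi : IntegrableOn q (Ioc 0 R)) (hq0 : ∀ x, 0 ≤ q x) :
    AEMeasurable (PP R q) (volume.restrict (Ioc 0 R)) :=
  aemeasurable_restrict_of_antitoneOn measurableSet_Ioc
    ((PP_anti hqi hq0).mono (fun _ hx => hx.1.le))

lemma bdd_on (f : ℝ → ℝ) (hf : Continuous f) (a b : ℝ) : ∃ C, ∀ x ∈ Icc a b, |f x| ≤ C := by
  obtain ⟨C, hC⟩ := isCompact_Icc.exists_bound_of_continuousOn (s := Icc a b) hf.continuousOn
  exact ⟨C, hC⟩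

lemma int_gamma (γ : ℝ → ℝ) (hγ : Continuous γ)
    (hq : AEMeasurable q (volume.restrict (Ioc 0 R))) (hqb : ∀ x, q x ∈ Icc 0 K) :
    IntegrableOn (fun r => r ^ (N-1) * γ (q r)) (Ioc 0 R) := by
  obtain ⟨C, hC⟩ := bdd_on γ hγ 0 K
  exact wint N R _ C (hγ.measurable.comp_aemeasurable hq).aestronglyMeasurable
    (fun r _ => hC _ (hqb r))

lemma int_k (k : ℝ → ℝ) (hk : Continuous k)
    (hq : AEMeasurable q (volume.restrict (Ioc 0 R))) (hqb : ∀ x, q x ∈ Icc 0 K) :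
    IntegrableOn (fun r => r ^ (N-1) * k (-(PP R q r))) (Ioc 0 R) := by
  obtain ⟨C, hC⟩ := bdd_on k hk (-(R*K)) 0
  refine wint N R _ C (hk.measurable.comp_aemeasurable
    (PP_aesm (adm_int_s12 hq hqb) (fun x => (hqb x).1)).neg).aestronglyMeasurable
    (fun r hr => hC _ ⟨neg_le_neg (PP_le hq hqb hr), ?_⟩)
  have := PP_nonneg (R := R) (fun x => (hqb x).1) r
  linarith

lemma GG_split (γ k : ℝ → ℝ) (hγ : Continuous γ) (hk : Continuous k)
    (hq : AEMeasurable q (volume.restrict (Ioc 0 R))) (hqb : ∀ x, q x ∈ Icc 0 K) :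
    GG N R γ k q = (∫ r in Ioc 0 R, r ^ (N-1) * γ (q r)) +
      ∫ r in Ioc 0 R, r ^ (N-1) * k (-(PP R q r)) := by
  rw [← integral_add (int_gamma γ hγ hq hqb) (int_k k hk hq hqb), GG]
  simp only [mul_add]

end adm

lemma rearr_le (N : ℕ) (R : ℝ) (K : ℝ) (γ k : ℝ → ℝ)
    (hγ : Continuous γ) (hkc : ConvexOn ℝ univ k) (hkm : Monotone k) (p q : ℝ → ℝ)
    (hq : AEMeasurable q (volume.restrict (Ioc 0 R)))
    (hqb : ∀ x, q x ∈ Icc 0 K) (hp : Monotone p) (hpb : ∀ x, p x ∈ Icc 0 K)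
    (hmap : (mw N R).map p = (mw N R).map q) :
    GG N R γ k p ≤ GG N R γ k q := by
  have hk : Continuous k := continuousOn_univ.1 (hkc.continuousOn isOpen_univ)
  have hpm : AEMeasurable p (volume.restrict (Ioc 0 R)) := hp.measurable.aemeasurable
  have hqm : AEMeasurable q (mw N R) := hq.mono_ac (mw_ac N R)
  have hcomp : ∀ f : ℝ → ℝ, Continuous f → ∫ r in Ioc 0 R, r ^ (N-1) * f (p r) =
      ∫ r in Ioc 0 R, r ^ (N-1) * f (q r) := by
    intro f hf
    rw [← mw_integral N R (fun r => f (p r)), ← mw_integral N R (fun r => f (q r)),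
      ← integral_map hp.measurable.aemeasurable hf.aestronglyMeasurable,
      ← integral_map hqm hf.aestronglyMeasurable, hmap]
  rw [GG_split γ k hγ hk hpm hpb, GG_split γ k hγ hk hq hqb, hcomp γ hγ]
  refine add_le_add le_rfl ?_
  obtain ⟨s, hsm, hs0, hs⟩ := exists_subgrad k hkc hkm
  have hpi : ∀ a, IntegrableOn p (Ioc a R) := fun a =>
    Measure.integrableOn_of_bounded (M := K) (by simp) hp.measurable.aestronglyMeasurable
      (by filter_upwards with r; rw [Real.norm_eq_abs, abs_of_nonneg (hpb r).1]; exact (hpb r).2)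
  have hPa : Antitone (PP R p) := by
    intro a b hab
    refine setIntegral_mono_set (hpi a) ?_ (Ioc_subset_Ioc_left hab).eventuallyLE
    filter_upwards with x using (hpb x).1
  let ψ : ℝ → ℝ := fun r => s (-(PP R p r))
  have hψm : Monotone ψ := fun a b hab => hsm (neg_le_neg (hPa hab))
  have hψb : ∀ r, ψ r ∈ Icc 0 (s 0) := fun r => ⟨hs0 _, hsm (by
    have := PP_nonneg (R := R) (fun x => (hpb x).1) r
    linarith)⟩
  have hqi := adm_int_s12 hq hqb
  let d : ℝ → ℝ := fun r => p r - q r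
  have hdw : IntegrableOn (fun r => r ^ (N-1) * d r) (Ioc 0 R) := by
    refine wint N R d K ?_ ?_
    · exact (hpm.sub hq).aestronglyMeasurable
    · intro r _
      rw [abs_le]
      constructor <;> simp only [d] <;> linarith [(hpb r).1, (hpb r).2, (hqb r).1, (hqb r).2]
  obtain ⟨hF1, hF2⟩ := fubini_tail N R d ψ (s 0) hdw
    hψm.measurable.aestronglyMeasurable (fun r => by
      rw [abs_of_nonneg (hψb r).1]; exact (hψb r).2)
  have hPd : ∀ r ∈ Ioc 0 R, PP R d r = PP R p r - PP R q r := fun r hr =>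
    integral_sub (hpi r) (hqi.mono_set (Ioc_subset_Ioc_left hr.1.le))
  -- tails
  have htail : ∀ a ∈ Icc 0 R, 0 ≤ ∫ x in Ioc a R, x ^ (N-1) * d x := by
    intro a ha
    set t := p a with ht
    have hfc : Continuous (fun y : ℝ => max (y - t) 0) := by fun_prop
    have hsub : Ioc a R ⊆ Ioc 0 R := Ioc_subset_Ioc_left ha.1
    have iq := int_gamma (N := N) _ hfc hq hqb
    have ip := int_gamma (N := N) _ hfc hpm hpb
    have hfc2 : Continuous (fun y : ℝ => (y - t)) := by fun_prop
    have iq2 := int_gamma (N := N) _ hfc2 hq hqb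
    have ip2 := int_gamma (N := N) _ hfc2 hpm hpb
    have h1 : ∫ x in Ioc a R, x ^ (N-1) * (q x - t) ≤ ∫ x in Ioc a R, x ^ (N-1) * (max (q x - t) 0) := by
      refine setIntegral_mono_on (iq2.mono_set hsub) (iq.mono_set hsub) measurableSet_Ioc
        (fun x hx => mul_le_mul_of_nonneg_left (le_max_left _ _) (pow_nonneg (hsub hx).1.le _))
    have h2 : ∫ x in Ioc a R, x ^ (N-1) * (max (q x - t) 0) ≤
        ∫ x in Ioc 0 R, x ^ (N-1) * (max (q x - t) 0) := by
      refine setIntegral_mono_set iq ?_ hsub.eventuallyLE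
      filter_upwards [ae_restrict_mem measurableSet_Ioc] with x hx
      exact mul_nonneg (pow_nonneg hx.1.le _) (le_max_right _ _)
    have h3 := hcomp _ hfc
    have h4 : ∫ x in Ioc 0 R, x ^ (N-1) * (max (p x - t) 0) =
        ∫ x in Ioc a R, x ^ (N-1) * (p x - t) := by
      have e1 : ∫ x in Ioc a R, x ^ (N-1) * (p x - t) =
          ∫ x in Ioc a R, x ^ (N-1) * (max (p x - t) 0) := by
        refine setIntegral_congr_fun measurableSet_Ioc (fun x hx => ?_)
        have : t ≤ p x := hp hx.1.le
        rw [max_eq_left (by linarith)]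
      rw [e1]
      refine (setIntegral_eq_of_subset_of_forall_sdiff_eq_zero measurableSet_Ioc hsub ?_)
      intro x hx
      have hxa : x ≤ a := by
        by_contra hc
        exact hx.2 ⟨not_le.1 hc, hx.1.2⟩
      have : p x ≤ t := hp hxa
      rw [max_eq_right (by linarith), mul_zero]
    have h5 : ∫ x in Ioc a R, x ^ (N-1) * d x = (∫ x in Ioc a R, x ^ (N-1) * (p x - t)) -
        ∫ x in Ioc a R, x ^ (N-1) * (q x - t) := by
      rw [← integral_sub (ip2.mono_set hsub) (iq2.mono_set hsub)]
      congr 1; ext x; simp only [d]; ring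
    rw [h5]; linarith
  obtain ⟨hl1, hl2⟩ := lam_mono N R (s 0) ψ hψm hψb
  have hpos := mono_test R _ _ _ hdw htail hl1 hl2
  have hpos2 : 0 ≤ ∫ r in Ioc 0 R, r ^ (N-1) * ψ r * PP R d r := by
    rw [hF2]
    refine hpos.trans_eq (setIntegral_congr_fun measurableSet_Ioc (fun r hr => ?_))
    have : r ^ (N-1) ≠ 0 := (pow_pos hr.1 _).ne'
    field_simp
  have hsum : (∫ r in Ioc 0 R, r ^ (N-1) * k (-(PP R p r))) +
      ∫ r in Ioc 0 R, r ^ (N-1) * ψ r * PP R d r ≤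
      ∫ r in Ioc 0 R, r ^ (N-1) * k (-(PP R q r)) := by
    rw [← integral_add (int_k k hk hpm hpb) hF1]
    refine setIntegral_mono_on ((int_k k hk hpm hpb).add hF1) (int_k k hk hq hqb)
      measurableSet_Ioc (fun r hr => ?_)
    have h1 := hs (-(PP R p r)) (-(PP R q r))
    have h2 : 0 ≤ r ^ (N-1) := pow_nonneg hr.1.le _
    rw [hPd r hr]
    have h3 := mul_le_mul_of_nonneg_left h1 h2
    calc _ = r ^ (N-1) * (k (-(PP R p r)) + s (-(PP R p r)) * (-(PP R q r) - -(PP R p r))) := by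
          simp only [ψ]; ring
      _ ≤ _ := h3
  linarith

lemma exists_min (N : ℕ) (hN : 1 ≤ N) (R : ℝ) (hR : 0 < R) (K : ℝ) (hK : 0 ≤ K) (γ k : ℝ → ℝ)
    (μ : ℝ → ℝ≥0∞) (hμ : MonotoneOn μ (Icc 0 R))
    (hγ : Continuous γ) (hkc : ConvexOn ℝ univ k) (hkm : Monotone k) :
    ∃ p : ℝ → ℝ, Monotone p ∧ (∀ x, p x ∈ Icc 0 K) ∧
      (∀ᵐ r ∂(volume.restrict (Ioc 0 R)), ENNReal.ofReal (p r) ≤ μ r) ∧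
      ∀ q : ℝ → ℝ, AEMeasurable q (volume.restrict (Ioc 0 R)) → (∀ x, q x ∈ Icc 0 K) →
        (∀ᵐ r ∂(volume.restrict (Ioc 0 R)), ENNReal.ofReal (q r) ≤ μ r) →
        GG N R γ k p ≤ GG N R γ k q := by
  have hk : Continuous k := continuousOn_univ.1 (hkc.continuousOn isOpen_univ)
  let T : Set ℝ := {v | ∃ q : ℝ → ℝ, AEMeasurable q (volume.restrict (Ioc 0 R)) ∧
    (∀ x, q x ∈ Icc 0 K) ∧
    (∀ᵐ r ∂(volume.restrict (Ioc 0 R)), ENNReal.ofReal (q r) ≤ μ r) ∧ GG N R γ k q = v}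
  have hTne : T.Nonempty := ⟨_, fun _ => 0, aemeasurable_const, fun _ => ⟨le_rfl, hK⟩,
    by simp, rfl⟩
  obtain ⟨C1, hC1⟩ := bdd_on γ hγ 0 K
  obtain ⟨C2, hC2⟩ := bdd_on k hk (-(R*K)) 0
  have hbnd : ∀ q : ℝ → ℝ, AEMeasurable q (volume.restrict (Ioc 0 R)) → (∀ x, q x ∈ Icc 0 K) →
      ∀ r ∈ Ioc 0 R, ‖r ^ (N-1) * (γ (q r) + k (-(PP R q r)))‖ ≤ R ^ (N-1) * (C1 + C2) := by
    intro q hq hqb r hr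
    rw [Real.norm_eq_abs, abs_mul, abs_of_nonneg (pow_nonneg hr.1.le _)]
    refine mul_le_mul (pow_le_pow_left₀ hr.1.le hr.2 _) ?_ (abs_nonneg _)
      (pow_nonneg (hr.1.le.trans hr.2) _)
    refine (abs_add_le _ _).trans (add_le_add (hC1 _ (hqb r))
      (hC2 _ ⟨neg_le_neg (PP_le hq hqb hr), ?_⟩))
    have := PP_nonneg (R := R) (fun x => (hqb x).1) r
    linarith
  have hTb : BddBelow T := by
    refine ⟨-(R ^ (N-1) * (C1 + C2) * R), ?_⟩
    rintro _ ⟨q, hq, hqb, _, rfl⟩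
    have := norm_setIntegral_le_of_norm_le_const (μ := volume) (s := Ioc 0 R) (by simp) (hbnd q hq hqb)
    simp only [Measure.real, Real.volume_Ioc, sub_zero, ENNReal.toReal_ofReal hR.le] at this
    exact (abs_le.1 this).1
  obtain ⟨v, -, hv, hvT⟩ := exists_seq_tendsto_sInf hTne hTb
  choose q hq hqb hqμ hqv using hvT
  choose p hp hpb hpt hpmap using fun n => rearr N hN R hR K (q n) (hq n)
    (Eventually.of_forall (hqb n)) hK
  have hpμ : ∀ n, ∀ r ∈ Ioc 0 R, ENNReal.ofReal (p n r) ≤ μ r := by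
    intro n r hr
    rcases le_or_gt (ENNReal.ofReal K) (μ r) with h | h
    · exact (ENNReal.ofReal_le_ofReal (hpb n r).2).trans h
    · have hfin : μ r ≠ ∞ := (h.trans ENNReal.ofReal_lt_top).ne
      have hle : (μ r).toReal ≤ K := ENNReal.toReal_le_of_le_ofReal hK h.le
      rw [ENNReal.ofReal_le_iff_le_toReal hfin]
      refine hpt n r hr _ ⟨ENNReal.toReal_nonneg, hle⟩ ?_
      filter_upwards [hqμ n, ae_restrict_mem measurableSet_Ioc] with x hx hx' hxr
      rw [← ENNReal.ofReal_le_iff_le_toReal hfin]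
      exact hx.trans (hμ ⟨hx'.1.le, hx'.2⟩ ⟨hr.1.le, hr.2⟩ hxr)
  have hle : ∀ n, GG N R γ k (p n) ≤ v n := fun n => by
    rw [← hqv n]
    exact rearr_le N R K γ k hγ hkc hkm _ _ (hq n) (hqb n) (hp n) (hpb n) (hpmap n)
  obtain ⟨φ, hφ, p0, hp0, hp0b, hlim⟩ := helly_sel K p hp hpb
  have hPlim : ∀ r, Tendsto (fun n => PP R (p (φ n)) r) atTop (𝓝 (PP R p0 r)) := by
    intro r
    refine tendsto_integral_of_dominated_convergence (fun _ => K)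
      (fun n => (hp _).measurable.aestronglyMeasurable) (integrable_const _) ?_
      (ae_restrict_of_ae hlim)
    intro n
    filter_upwards with x
    rw [Real.norm_eq_abs, abs_of_nonneg (hpb _ x).1]; exact (hpb _ x).2
  have hGlim : Tendsto (fun n => GG N R γ k (p (φ n))) atTop (𝓝 (GG N R γ k p0)) := by
    refine tendsto_integral_of_dominated_convergence (fun _ => R ^ (N-1) * (C1 + C2))
      (fun n => ?_) (integrable_const _) ?_ ?_
    · have hm := (hp (φ n)).measurable.aemeasurable (μ := volume.restrict (Ioc 0 R))
      have := (int_gamma (N := N) γ hγ hm (hpb _)).add (int_k (N := N) k hk hm (hpb _))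
      refine this.aestronglyMeasurable.congr ?_
      filter_upwards with r
      simp only [Pi.add_apply]; ring
    · intro n
      filter_upwards [ae_restrict_mem measurableSet_Ioc] with r hr
      exact hbnd _ (hp _).measurable.aemeasurable (hpb _) r hr
    · filter_upwards [ae_restrict_of_ae hlim] with r hr
      exact (((hγ.tendsto _).comp hr).add ((hk.tendsto _).comp (hPlim r).neg)).const_mul _
  refine ⟨p0, hp0, hp0b, ?_, ?_⟩
  · filter_upwards [ae_restrict_of_ae hlim, ae_restrict_mem measurableSet_Ioc] with r hr hr'
    exact le_of_tendsto ((ENNReal.continuous_ofReal.tendsto _).comp hr)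
      (Eventually.of_forall (fun n => hpμ _ r hr'))
  · intro q' hq' hqb' hqμ'
    have h1 : GG N R γ k p0 ≤ sInf T :=
      le_of_tendsto_of_tendsto hGlim (hv.comp hφ.tendsto_atTop)
        (Eventually.of_forall (fun n => hle _))
    exact h1.trans (csInf_le hTb ⟨q', hq', hqb', hqμ', rfl⟩)

lemma ERInt_mono {f f' : ℝ → ℝ} {s : Set ℝ} (hs : MeasurableSet s) (h : ∀ x ∈ s, f x ≤ f' x) :
    ERInt f s ≤ ERInt f' s := by
  unfold ERInt
  refine EReal.sub_le_sub ?_ ?_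
  · exact EReal.coe_ennreal_le_coe_ennreal_iff.2
      (setLIntegral_mono' hs (fun x hx => ENNReal.ofReal_le_ofReal (h x hx)))
  · exact EReal.coe_ennreal_le_coe_ennreal_iff.2
      (setLIntegral_mono' hs (fun x hx => ENNReal.ofReal_le_ofReal (neg_le_neg (h x hx))))

lemma ERInt_eq {f : ℝ → ℝ} {s : Set ℝ} (hf : IntegrableOn f s) :
    ERInt f s = ((∫ x in s, f x : ℝ) : EReal) := by
  unfold ERInt
  rw [integral_eq_lintegral_pos_part_sub_lintegral_neg_part hf]
  have h1 : ∫⁻ x in s, ENNReal.ofReal (f x) ≠ ∞ := by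
    exact (hf.lintegral_lt_top).ne
  have h2 : ∫⁻ x in s, ENNReal.ofReal (- f x) ≠ ∞ := by
    exact (hf.neg.lintegral_lt_top).ne
  rw [EReal.coe_sub, EReal.coe_ennreal_toReal h1, EReal.coe_ennreal_toReal h2]

lemma leftD_bdd (h : ℝ → ℝ) (hh : ConvexOn ℝ univ h) {s t : ℝ} (hs : s < 0) (ht : 0 < t) :
    (h s - h 0) / s ≤ (h t - h 0) / t := by
  have := hh.secant_mono (a := 0) (x := s) (y := t) (by simp) (by simp) (by simp) hs.ne ht.ne'
    (hs.trans ht).le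
  simpa using this

lemma le_leftD (h : ℝ → ℝ) (hh : ConvexOn ℝ univ h) {s : ℝ} (hs : s < 0) :
    (h s - h 0) / s ≤ leftD h :=
  le_csSup ⟨(h 1 - h 0) / 1, by rintro _ ⟨t, ht, rfl⟩; exact leftD_bdd h hh ht one_pos⟩
    ⟨s, hs, rfl⟩

lemma rightD_le (h : ℝ → ℝ) (hh : ConvexOn ℝ univ h) {s : ℝ} (hs : 0 < s) :
    rightD h ≤ (h s - h 0) / s :=
  csInf_le ⟨(h (-1) - h 0) / (-1), by
    rintro _ ⟨t, ht, rfl⟩; exact leftD_bdd h hh (by norm_num) ht⟩ ⟨s, hs, rfl⟩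

lemma leftD_le_rightD (h : ℝ → ℝ) (hh : ConvexOn ℝ univ h) : leftD h ≤ rightD h := by
  refine csSup_le ⟨_, -1, by simp, rfl⟩ ?_
  rintro _ ⟨s, hs, rfl⟩
  refine le_csInf ⟨_, 1, by simp, rfl⟩ ?_
  rintro _ ⟨t, ht, rfl⟩
  exact leftD_bdd h hh hs ht

lemma h_slope (h : ℝ → ℝ) (hh : ConvexOn ℝ univ h) {w v : ℝ} (hwv : w ≤ v) (hv : v ≤ 0) :
    h v - h w ≤ leftD h * (v - w) := by
  have h0 : ∀ s < 0, h 0 - h s ≤ leftD h * (0 - s) := fun s hs => by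
    have := le_leftD h hh hs
    rw [div_le_iff_of_neg hs] at this
    linarith
  rcases hwv.eq_or_lt with rfl | hwv
  · simp
  rcases hv.eq_or_lt with rfl | hv
  · exact h0 w hwv
  have h1 := hh.slope_mono_adjacent (x := w) (y := v) (z := 0) (by simp) (by simp) hwv hv
  have h2 : (h 0 - h v) / (0 - v) ≤ leftD h := by
    rw [div_le_iff₀ (by linarith)]; exact h0 v hv
  have h3 := h1.trans h2
  rwa [div_le_iff₀ (by linarith)] at h3

lemma h_hat (h : ℝ → ℝ) (hh : ConvexOn ℝ univ h) (hpos : 0 < leftD h) :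
    ∃ k : ℝ → ℝ, ConvexOn ℝ univ k ∧ Monotone k ∧ (∀ t, k t ≤ h t) ∧
      (∀ w v, w ≤ v → v ≤ 0 → k v - k w ≤ leftD h * (v - w)) ∧
      (k = h ∨ ∃ a > 0, k = fun t => h (max t (-a))) := by
  have hcont : Continuous h := continuousOn_univ.1 (hh.continuousOn isOpen_univ)
  by_cases hm : Monotone h
  · exact ⟨h, hh, hm, fun _ => le_rfl, fun w v h1 h2 => h_slope h hh h1 h2, Or.inl rfl⟩
  obtain ⟨t, ht0, ht⟩ : ∃ t < 0, h t < h 0 := by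
    have hne : ((fun t : ℝ => (h t - h 0) / t) '' Iio 0).Nonempty := ⟨_, -1, by simp, rfl⟩
    obtain ⟨_, ⟨t, ht, rfl⟩, hlt⟩ := exists_lt_of_lt_csSup hne hpos
    refine ⟨t, ht, ?_⟩
    have := (div_pos_iff.1 hlt)
    rcases this with h1 | h1
    · exact absurd h1.2 (not_lt.2 (le_of_lt ht))
    · linarith [h1.1]
  obtain ⟨x, y, hxy, hlt⟩ : ∃ x y, x ≤ y ∧ h y < h x := by
    unfold Monotone at hm; push Not at hm; exact hm
  have hxy' : x < y := lt_of_le_of_ne hxy (by rintro rfl; exact lt_irrefl _ hlt)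
  have hright : ∀ s, 0 < s → h 0 ≤ h s := fun s hs => by
    have h1 := hh.slope_mono_adjacent (x := t) (y := 0) (z := s) (by simp) (by simp) ht0 hs
    have h2 : 0 < (h 0 - h t) / (0 - t) := div_pos (by linarith) (by linarith)
    have h3 := h2.trans_le h1
    have h4 := (div_pos_iff_of_pos_right (by linarith : 0 < s - 0)).1 h3
    linarith
  have hleft : ∀ s, s < x → h x ≤ h s := fun s hs => by
    have h1 := hh.slope_mono_adjacent (x := s) (y := x) (z := y) (by simp) (by simp) hs hxy'
    have h2 : (h y - h x) / (y - x) < 0 := div_neg_of_neg_of_pos (by linarith) (by linarith)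
    have h3 := h1.trans_lt h2
    rw [div_lt_iff₀ (by linarith)] at h3
    linarith
  obtain ⟨z, hz, hzmin⟩ := isCompact_Icc.exists_isMinOn (s := Icc (min x t) 0)
    ⟨t, min_le_right _ _, ht0.le⟩ hcont.continuousOn
  have hz0 : h z ≤ h 0 := hzmin ⟨(min_le_right _ _).trans ht0.le, le_rfl⟩
  have hglob : ∀ s, h z ≤ h s := fun s => by
    rcases lt_or_ge 0 s with h1 | h1
    · exact hz0.trans (hright s h1)
    rcases lt_or_ge s (min x t) with h2 | h2
    · refine le_trans ?_ (hleft s (h2.trans_le (min_le_left _ _)))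
      rcases lt_or_ge 0 x with h3 | h3
      · exact hz0.trans (hright x h3)
      · exact hzmin ⟨min_le_left _ _, h3⟩
    · exact hzmin ⟨h2, h1⟩
  have hzneg : z < 0 := by
    refine lt_of_le_of_ne hz.2 ?_
    rintro rfl
    exact absurd ht (not_lt.2 (hglob t))
  have hmono : ∀ s s', z ≤ s → s ≤ s' → h s ≤ h s' := fun s s' h1 h2 => by
    have := hh.le_max_of_mem_Icc (x := z) (y := s') (z := s) (by simp) (by simp) ⟨h1, h2⟩
    rwa [max_eq_right (hglob s')] at this
  refine ⟨fun s => h (max s z), ⟨convex_univ, ?_⟩, ?_, ?_, ?_, Or.inr ⟨-z, by linarith, by simp⟩⟩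
  · intro p _ q _ a b ha hb hab
    simp only [smul_eq_mul]
    refine le_trans (hmono _ (a * max p z + b * max q z) (le_max_right _ _) ?_) ?_
    · refine max_le ?_ ?_
      · exact add_le_add (mul_le_mul_of_nonneg_left (le_max_left _ _) ha)
          (mul_le_mul_of_nonneg_left (le_max_left _ _) hb)
      · calc z = a * z + b * z := by rw [← add_mul, hab, one_mul]
          _ ≤ _ := add_le_add (mul_le_mul_of_nonneg_left (le_max_right _ _) ha)
            (mul_le_mul_of_nonneg_left (le_max_right _ _) hb)
    · exact hh.2 (mem_univ _) (mem_univ _) ha hb hab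
  · intro p q hpq
    exact hmono _ _ (le_max_right _ _) (max_le_max hpq le_rfl)
  · intro s
    rcases le_total z s with h1 | h1
    · simp [max_eq_left h1]
    · simp only [max_eq_right h1]; exact hglob s
  · intro w v hwv hv
    refine (h_slope h hh (max_le_max hwv le_rfl) (max_le hv hzneg.le)).trans ?_
    refine mul_le_mul_of_nonneg_left ?_ hpos.le
    rcases le_total z w with h1 | h1
    · rw [max_eq_left h1, max_eq_left (h1.trans hwv)]
    · rw [max_eq_right h1]
      rcases le_total z v with h2 | h2
      · rw [max_eq_left h2]; linarith
      · rw [max_eq_right h2]; linarith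

lemma exists_K (g : ℝ → ℝ) (hg1 : ConvexOn ℝ univ (fun z : ℝ => g |z|)) (κ : ℝ)
    (hκ : (κ : EReal) < MconstE g) :
    ∃ K > 0, ∀ s, K ≤ s → κ * (s - K) ≤ g s - g K := by
  obtain ⟨σ, hσ1, hσ2⟩ := EReal.lt_iff_exists_real_btwn.1 hκ
  have hev := eventually_lt_of_lt_liminf (show (σ : EReal) < liminf _ _ from hσ2)
  have hκσ : κ < σ := by exact_mod_cast hσ1
  obtain ⟨K, ⟨h1, h2⟩, h3⟩ := ((hev.and (eventually_gt_atTop 0)).and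
    (eventually_ge_atTop (g 0 / (σ - κ)))).exists
  have h1' : σ < g K / K := by exact_mod_cast h1
  rw [lt_div_iff₀ h2] at h1'
  rw [div_le_iff₀ (by linarith)] at h3
  refine ⟨K, h2, fun s hs => ?_⟩
  rcases hs.eq_or_lt with rfl | hs
  · simp
  have h4 := hg1.slope_mono_adjacent (x := 0) (y := K) (z := s) (by simp) (by simp) h2 hs
  simp only [abs_zero, abs_of_pos h2, abs_of_pos (h2.trans hs), sub_zero] at h4
  have h5 : κ ≤ (g K - g 0) / K := by
    rw [le_div_iff₀ h2]; nlinarith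
  have h6 := h5.trans h4
  rwa [le_div_iff₀ (by linarith)] at h6

lemma cut (R K : ℝ) (p : ℝ → ℝ) (hp : Monotone p) (hpb : ∀ x, p x ∈ Icc 0 K) (a : ℝ) (ha : 0 < a) :
    ∃ p' : ℝ → ℝ, Monotone p' ∧ (∀ x, p' x ∈ Icc 0 (p x)) ∧
      ∀ r ∈ Ioc 0 R, PP R p' r = min (PP R p r) a := by
  have hpi : ∀ a b, IntegrableOn p (Ioc a b) := fun a b =>
    Measure.integrableOn_of_bounded (M := K) (by simp) hp.measurable.aestronglyMeasurable
      (by filter_upwards with r; rw [Real.norm_eq_abs, abs_of_nonneg (hpb r).1]; exact (hpb r).2)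
  have hPa : Antitone (PP R p) := by
    intro a b hab
    refine setIntegral_mono_set (hpi a R) ?_ (Ioc_subset_Ioc_left hab).eventuallyLE
    filter_upwards with x using (hpb x).1
  refine ⟨fun r => if PP R p r < a then p r else 0, ?_, ?_, ?_⟩
  · intro x y hxy
    simp only
    split_ifs with h1 h2 h2
    · exact hp hxy
    · exact absurd ((hPa hxy).trans_lt h1) h2
    · exact (hpb y).1
    · exact le_rfl
  · intro x
    simp only
    split_ifs
    · exact ⟨(hpb x).1, le_rfl⟩
    · exact ⟨le_rfl, (hpb x).1⟩
  · intro r hr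
    rcases lt_or_ge (PP R p r) a with h | h
    · rw [min_eq_left h.le]
      refine setIntegral_congr_fun measurableSet_Ioc (fun x hx => ?_)
      simp [(hPa hx.1.le).trans_lt h]
    · rw [min_eq_right h]
      have hc : ContinuousOn (PP R p) (Icc r R) := by
        have h1 : Continuous (fun b => -∫ x in R..b, p x) :=
          (intervalIntegral.continuous_primitive (fun a b => ⟨hpi a b, hpi b a⟩) R).neg
        refine h1.continuousOn.congr (fun x hx => ?_)
        show PP R p x = -∫ t in R..x, p t
        rw [← intervalIntegral.integral_symm, intervalIntegral.integral_of_le hx.2, PP]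
      have hPR : PP R p R = 0 := by simp [PP]
      obtain ⟨r', hr', hr'e⟩ := intermediate_value_Icc' hr.2 hc (show a ∈ Icc _ _ from
        ⟨by rw [hPR]; exact ha.le, h⟩)
      have hcl : IsCompact (Icc r R ∩ PP R p ⁻¹' Ici a) :=
        isCompact_Icc.of_isClosed_subset (hc.preimage_isClosed_of_isClosed isClosed_Icc isClosed_Ici)
          inter_subset_left
      obtain ⟨r1, hr1, hr1m⟩ := hcl.exists_isGreatest ⟨r', hr', hr'e.ge⟩
      have hPr1 : PP R p r1 = a := by
        refine le_antisymm ?_ hr1.2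
        rw [← hr'e]
        exact hPa (hr1m ⟨hr', hr'e.ge⟩)
      have e1 : PP R (fun r => if PP R p r < a then p r else 0) r =
          ∫ x in Ioc r1 R, (if PP R p x < a then p x else 0) := by
        refine setIntegral_eq_of_subset_of_forall_sdiff_eq_zero measurableSet_Ioc
          (Ioc_subset_Ioc_left hr1.1.1) ?_
        intro x hx
        have hxr : x ≤ r1 := by
          by_contra hcc
          exact hx.2 ⟨not_le.1 hcc, hx.1.2⟩
        have : a ≤ PP R p x := hPr1 ▸ hPa hxr
        simp [not_lt.2 this]
      rw [e1, ← hPr1, PP]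
      refine setIntegral_congr_fun measurableSet_Ioc (fun x hx => ?_)
      have : PP R p x < PP R p r1 := by
        by_contra hcc
        have := hr1m (show x ∈ _ from ⟨⟨hr1.1.1.trans hx.1.le, hx.2⟩, hPr1 ▸ not_lt.1 hcc⟩)
        exact absurd hx.1 (not_lt.2 this)
      simp only [PP] at this
      simp [PP, this]

lemma PP_diff (R K : ℝ) (p : ℝ → ℝ) (hp : Monotone p) (hpb : ∀ x, p x ∈ Icc 0 K) {x y : ℝ}
    (hxy : x ≤ y) (hy : y ≤ R) :
    p x * (y - x) ≤ PP R p x - PP R p y ∧ PP R p x - PP R p y ≤ p y * (y - x) := by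
  have hpi : ∀ a b, IntegrableOn p (Ioc a b) := fun a b =>
    Measure.integrableOn_of_bounded (M := K) (by simp) hp.measurable.aestronglyMeasurable
      (by filter_upwards with r; rw [Real.norm_eq_abs, abs_of_nonneg (hpb r).1]; exact (hpb r).2)
  have e : PP R p x - PP R p y = ∫ t in Ioc x y, p t := by
    have : PP R p x = (∫ t in Ioc x y, p t) + PP R p y := by
      rw [PP, PP, ← setIntegral_union (Ioc_disjoint_Ioc_of_le le_rfl) measurableSet_Ioc (hpi _ _) (hpi _ _),
        Ioc_union_Ioc_eq_Ioc hxy hy]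
    linarith
  rw [e]
  constructor
  · calc p x * (y - x) = ∫ t in Ioc x y, p x := by simp [hxy, mul_comm]
      _ ≤ _ := setIntegral_mono_on (by simp) (hpi _ _) measurableSet_Ioc (fun t ht => hp ht.1.le)
  · calc _ ≤ ∫ t in Ioc x y, p y :=
          setIntegral_mono_on (hpi _ _) (by simp) measurableSet_Ioc (fun t ht => hp ht.2)
      _ = p y * (y - x) := by simp [hxy, mul_comm]

lemma PP_convex (R K : ℝ) (p : ℝ → ℝ) (hp : Monotone p) (hpb : ∀ x, p x ∈ Icc 0 K) :
    MonotoneOn (fun r => -(PP R p r)) (Ioc 0 R) ∧ ConvexOn ℝ (Ioc 0 R) (fun r => -(PP R p r)) := by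
  constructor
  · intro x hx y hy hxy
    have h1 := (PP_diff R K p hp hpb hxy hy.2).1
    have h2 := mul_nonneg (hpb x).1 (sub_nonneg.2 hxy)
    simp only; linarith
  · refine convexOn_of_slope_mono_adjacent (convex_Ioc _ _) ?_
    intro x y z hx hz hxy hyz
    have h1 := (PP_diff R K p hp hpb hxy.le (hyz.le.trans hz.2)).2
    have h2 := (PP_diff R K p hp hpb hyz.le hz.2).1
    refine le_trans (b := p y) ?_ ?_
    · rw [div_le_iff₀ (by linarith)]; linarith
    · rw [le_div_iff₀ (by linarith)]; linarith

lemma trunc_bound (N : ℕ) (hN : 1 ≤ N) (R : ℝ) (g h k : ℝ → ℝ)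
    (hg1 : ConvexOn ℝ univ (fun z : ℝ => g |z|))
    (hk : Continuous k) (hkm : Monotone k) (hkh : ∀ t, k t ≤ h t) (c : ℝ) (hc : 0 ≤ c)
    (hslope : ∀ w v, w ≤ v → v ≤ 0 → k v - k w ≤ c * (v - w))
    (K : ℝ) (hK : 0 < K) (hKs : ∀ s, K ≤ s → c * R / N * (s - K) ≤ g s - g K) (u : RadW N R) :
    ((GG N R (fun z => g |z|) k (fun r => min |u.u' r| K) : ℝ) : EReal) ≤ Fcon N R g h u := by
  have hγ : Continuous (fun z : ℝ => g |z|) := continuousOn_univ.1 (hg1.continuousOn isOpen_univ)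
  set q : ℝ → ℝ := fun r => |u.u' r| with hqdef
  have hqw : IntegrableOn (fun r => r ^ (N-1) * q r) (Ioc 0 R) := u.integ
  have hqm : AEMeasurable q (volume.restrict (Ioc 0 R)) :=
    (aesm_of_weight hqw.aestronglyMeasurable).aemeasurable
  set q' : ℝ → ℝ := fun r => min (q r) K with hq'def
  have hq'm : AEMeasurable q' (volume.restrict (Ioc 0 R)) := hqm.min aemeasurable_const
  have hq'b : ∀ x, q' x ∈ Icc 0 K := fun x => ⟨le_min (abs_nonneg _) hK.le, min_le_right _ _⟩
  have hqi : ∀ r ∈ Ioc 0 R, IntegrableOn q (Ioc r R) := by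
    intro r hr
    have h1 : IntegrableOn (fun x => (r ^ (N-1))⁻¹ * (x ^ (N-1) * q x)) (Ioc r R) :=
      (hqw.mono_set (Ioc_subset_Ioc_left hr.1.le)).const_mul _
    refine Integrable.mono' h1 ((hqm.mono_measure (Measure.restrict_mono
      (Ioc_subset_Ioc_left hr.1.le) le_rfl)).aestronglyMeasurable) ?_
    filter_upwards [ae_restrict_mem measurableSet_Ioc] with x hx
    have hr' : 0 < r ^ (N-1) := pow_pos hr.1 _
    have hx' : r ^ (N-1) ≤ x ^ (N-1) := pow_le_pow_left₀ hr.1.le hx.1.le _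
    rw [Real.norm_eq_abs, abs_of_nonneg (abs_nonneg _), ← mul_assoc]
    refine le_mul_of_one_le_left (abs_nonneg _) ?_
    rw [inv_mul_eq_div, le_div_iff₀ hr', one_mul]; exact hx'
  let d : ℝ → ℝ := fun r => q r - q' r
  have hd0 : ∀ r, 0 ≤ d r := fun r => sub_nonneg.2 (min_le_left _ _)
  have hq'w : IntegrableOn (fun r => r ^ (N-1) * q' r) (Ioc 0 R) :=
    int_gamma (N := N) (fun x => x) continuous_id hq'm hq'b
  have hdw : IntegrableOn (fun r => r ^ (N-1) * d r) (Ioc 0 R) := by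
    refine (hqw.sub hq'w).congr ?_
    filter_upwards with r
    simp only [d, Pi.sub_apply]; ring
  obtain ⟨hF1, hF2⟩ := fubini_tail N R d (fun _ => c) c hdw aestronglyMeasurable_const
    (fun r => (abs_of_nonneg hc).le)
  have hG1 := int_gamma (N := N) _ hγ hq'm hq'b
  have hG2 := int_k (N := N) _ hk hq'm hq'b
  have hG : IntegrableOn (fun r => r ^ (N-1) * (g |q' r| + k (-(PP R q' r)))) (Ioc 0 R) := by
    refine (hG1.add hG2).congr ?_
    filter_upwards with r
    simp only [Pi.add_apply]; ring
  have hS : IntegrableOn (fun r => r ^ (N-1) * (g |q' r| + k (-(PP R q' r))) +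
      c * R / N * (r ^ (N-1) * d r)) (Ioc 0 R) := hG.add (hdw.const_mul (c * R / N))
  have hI : IntegrableOn (fun r => (r ^ (N-1) * (g |q' r| + k (-(PP R q' r))) +
      c * R / N * (r ^ (N-1) * d r)) - r ^ (N-1) * c * PP R d r) (Ioc 0 R) := hS.sub hF1
  have hval : GG N R (fun z => g |z|) k q' ≤ ∫ r in Ioc 0 R,
      ((r ^ (N-1) * (g |q' r| + k (-(PP R q' r))) + c * R / N * (r ^ (N-1) * d r)) -
        r ^ (N-1) * c * PP R d r) := by
    rw [integral_sub hS hF1, integral_add hG (hdw.const_mul (c * R / N)), hF2]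
    have hin : ∀ ρ ∈ Ioc 0 R, ∫ r in Ioc 0 ρ, r ^ (N-1) * c = c * ρ ^ N / N := by
      intro ρ hρ
      rw [integral_mul_const, ← intervalIntegral.integral_of_le hρ.1.le, integral_pow]
      have : N - 1 + 1 = N := by omega
      rw [this, zero_pow (by omega)]
      have h2 : ((N - 1 : ℕ) : ℝ) + 1 = N := by exact_mod_cast this
      rw [h2]; ring
    have hN0 : (0:ℝ) < N := by exact_mod_cast hN
    have : ∫ ρ in Ioc 0 R, d ρ * ∫ r in Ioc 0 ρ, r ^ (N-1) * c ≤
        ∫ r in Ioc 0 R, c * R / N * (r ^ (N-1) * d r) := by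
      refine integral_mono_of_nonneg ?_ (hdw.const_mul (c * R / N)) ?_
      · filter_upwards [ae_restrict_mem measurableSet_Ioc] with ρ hρ
        rw [hin ρ hρ]
        have := pow_nonneg hρ.1.le N
        have := hd0 ρ
        simp only [Pi.zero_apply]
        positivity
      · filter_upwards [ae_restrict_mem measurableSet_Ioc] with ρ hρ
        rw [hin ρ hρ]
        have h1 : ρ ^ N ≤ ρ ^ (N-1) * R := by
          calc ρ ^ N = ρ ^ (N-1) * ρ := by rw [← pow_succ]; congr 1; omega
            _ ≤ _ := mul_le_mul_of_nonneg_left hρ.2 (pow_nonneg hρ.1.le _)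
        have h2 : 0 ≤ c / N * d ρ := mul_nonneg (by positivity) (hd0 ρ)
        calc d ρ * (c * ρ ^ N / N) = (c / N * d ρ) * ρ ^ N := by ring
          _ ≤ (c / N * d ρ) * (ρ ^ (N-1) * R) := mul_le_mul_of_nonneg_left h1 h2
          _ = _ := by ring
    rw [GG]
    linarith
  refine (EReal.coe_le_coe_iff.2 hval).trans ?_
  rw [← ERInt_eq hI, Fcon]
  refine ERInt_mono measurableSet_Ioc (fun r hr => ?_)
  have hPd : PP R d r = PP R q r - PP R q' r :=
    integral_sub (hqi r hr) ((adm_int_s12 hq'm hq'b).mono_set (Ioc_subset_Ioc_left hr.1.le))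
  have hPq' : 0 ≤ PP R q' r := PP_nonneg (fun x => (hq'b x).1) r
  have hPdn : 0 ≤ PP R d r := PP_nonneg hd0 r
  have h1 : g |q' r| + c * R / N * d r ≤ g (q r) := by
    rw [abs_of_nonneg (hq'b r).1]
    simp only [d, hq'def]
    rcases le_total (q r) K with h | h
    · rw [min_eq_left h]; simp
    · rw [min_eq_right h]; linarith [hKs _ h]
  have h2 : k (-(PP R q' r)) - c * PP R d r ≤ h (u.u r) := by
    have h3 : -(PP R q r) ≤ u.u r := by
      rw [u.rep r hr]
      refine neg_le_neg ?_
      have h7 : |∫ ρ in Ioc r R, u.u' ρ| ≤ ∫ ρ in Ioc r R, |u.u' ρ| :=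
        norm_integral_le_integral_norm (μ := volume.restrict (Ioc r R)) u.u'
      exact (le_abs_self _).trans h7
    have h4 := hslope (-(PP R q r)) (-(PP R q' r)) (by linarith) (by linarith)
    have h5 := (hkm h3).trans (hkh _)
    rw [hPd]
    nlinarith
  have h0 : 0 ≤ r ^ (N-1) := pow_nonneg hr.1.le _
  have h6 := mul_le_mul_of_nonneg_left (add_le_add h1 h2) h0
  calc _ = r ^ (N-1) * (g |q' r| + c * R / N * d r + (k (-(PP R q' r)) - c * PP R d r)) := by ring
    _ ≤ _ := h6

lemma core (N : ℕ) (hN : 1 ≤ N) (R : ℝ) (hR : 0 < R)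
    (g h : ℝ → ℝ) (μ : ℝ → ℝ≥0∞)
    (hg1 : ConvexOn ℝ univ (fun z : ℝ => g |z|))
    (hg2 : 0 < MconstE g)
    (hh1 : ConvexOn ℝ univ h)
    (hhg : ((min |leftD h| |rightD h| * R : ℝ) : EReal) < ((N : ℝ) : EReal) * MconstE g)
    (hμmono : MonotoneOn μ (Icc 0 R)) (hr0 : 0 ≤ rightD h) :
    ∃ ubar : RadW N R, memWmu N R μ ubar ∧
        (∀ u : RadW N R, memWmu N R μ u → Fcon N R g h ubar ≤ Fcon N R g h u) ∧
        MonotoneOn ubar.u (Ioc 0 R) ∧ ConvexOn ℝ (Ioc 0 R) ubar.u := by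
  have hγ : Continuous (fun z : ℝ => g |z|) := continuousOn_univ.1 (hg1.continuousOn isOpen_univ)
  have hgm : ∀ a b : ℝ, 0 ≤ a → a ≤ b → g a ≤ g b := by
    intro a b ha hab
    have := hg1.le_max_of_mem_Icc (x := -b) (y := b) (z := a) (by simp) (by simp)
      ⟨by linarith, hab⟩
    simpa [abs_of_nonneg ha, abs_of_nonneg (ha.trans hab)] using this
  rcases le_or_gt (leftD h) 0 with hc | hc
  · have hmin : ∀ t, h 0 ≤ h t := by
      intro t
      rcases lt_trichotomy t 0 with ht | rfl | ht
      · have := (le_leftD h hh1 ht).trans hc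
        rw [div_le_iff_of_neg ht] at this
        linarith
      · exact le_rfl
      · have := hr0.trans (rightD_le h hh1 ht)
        rw [le_div_iff₀ ht] at this
        linarith
    refine ⟨⟨fun _ => 0, fun _ => 0, by simp, by simp⟩, ?_, ?_, ?_, ?_⟩
    · filter_upwards with r
      simp
    · intro u _
      refine ERInt_mono measurableSet_Ioc (fun r hr => ?_)
      refine mul_le_mul_of_nonneg_left ?_ (pow_nonneg hr.1.le _)
      refine add_le_add ?_ (hmin _)
      exact hgm _ _ (abs_nonneg _) (by simp)
    · exact fun _ _ _ _ _ => le_rfl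
    · exact convexOn_const 0 (convex_Ioc _ _)
  · have hN0 : (0:ℝ) < N := by exact_mod_cast hN
    have hκ : ((leftD h * R / N : ℝ) : EReal) < MconstE g := by
      have h1 : min |leftD h| |rightD h| = leftD h := by
        rw [abs_of_pos hc, abs_of_nonneg hr0, min_eq_left (leftD_le_rightD h hh1)]
      rw [h1] at hhg
      generalize MconstE g = M at *
      induction M with
      | bot => simp at hg2
      | top => exact EReal.coe_lt_top _
      | coe m =>
        rw [← EReal.coe_mul, EReal.coe_lt_coe_iff] at hhg
        rw [EReal.coe_lt_coe_iff, div_lt_iff₀ hN0]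
        linarith
    obtain ⟨K, hK, hKs⟩ := exists_K g hg1 _ hκ
    obtain ⟨k, hkc, hkm, hkh, hksl, hkcase⟩ := h_hat h hh1 hc
    have hk : Continuous k := continuousOn_univ.1 (hkc.continuousOn isOpen_univ)
    obtain ⟨p, hp, hpb, hpμ, hpmin⟩ :=
      exists_min N hN R hR K hK.le (fun z => g |z|) k μ hμmono hγ hkc hkm
    obtain ⟨p', hp', hpb', hpk⟩ : ∃ p' : ℝ → ℝ, Monotone p' ∧ (∀ x, p' x ∈ Icc 0 (p x)) ∧
        ∀ r ∈ Ioc 0 R, h (-(PP R p' r)) = k (-(PP R p r)) := by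
      rcases hkcase with rfl | ⟨a, ha, rfl⟩
      · exact ⟨p, hp, fun x => ⟨(hpb x).1, le_rfl⟩, fun _ _ => rfl⟩
      · obtain ⟨p', h1, h2, h3⟩ := cut R K p hp hpb a ha
        refine ⟨p', h1, h2, fun r hr => ?_⟩
        simp only
        rw [h3 r hr, max_neg_neg]
    have hpbK : ∀ x, p' x ∈ Icc 0 K := fun x => ⟨(hpb' x).1, (hpb' x).2.trans (hpb x).2⟩
    have hpm : AEMeasurable p (volume.restrict (Ioc 0 R)) := hp.measurable.aemeasurable
    have hpm' : AEMeasurable p' (volume.restrict (Ioc 0 R)) := hp'.measurable.aemeasurable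
    refine ⟨⟨fun r => -(PP R p' r), p',
      int_gamma (N := N) (fun x => |x|) continuous_abs hpm' hpbK, fun r _ => rfl⟩, ?_, ?_, ?_⟩
    · filter_upwards [hpμ] with r hr
      refine le_trans (ENNReal.ofReal_le_ofReal ?_) hr
      show |p' r| ≤ p r
      rw [abs_of_nonneg (hpb' r).1]; exact (hpb' r).2
    · intro u hu
      have hG1 := int_gamma (N := N) _ hγ hpm hpb
      have hG2 := int_k (N := N) _ hk hpm hpb
      have hG : IntegrableOn (fun r => r ^ (N-1) * (g |p r| + k (-(PP R p r)))) (Ioc 0 R) := by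
        refine (hG1.add hG2).congr ?_
        filter_upwards with r
        simp only [Pi.add_apply]; ring
      have hq : AEMeasurable (fun r => |u.u' r|) (volume.restrict (Ioc 0 R)) :=
        (aesm_of_weight u.integ.aestronglyMeasurable).aemeasurable
      have h1 := hpmin (fun r => min |u.u' r| K) (hq.min aemeasurable_const)
        (fun x => ⟨le_min (abs_nonneg _) hK.le, min_le_right _ _⟩) (by
          filter_upwards [hu] with r hr
          exact le_trans (ENNReal.ofReal_le_ofReal (min_le_left _ _)) hr)
      have h2 := trunc_bound N hN R g h k hg1 hk hkm hkh (leftD h) hc.le hksl K hK hKs u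
      refine le_trans ?_ ((EReal.coe_le_coe_iff.2 h1).trans h2)
      rw [GG, ← ERInt_eq hG]
      refine ERInt_mono measurableSet_Ioc (fun r hr => ?_)
      refine mul_le_mul_of_nonneg_left ?_ (pow_nonneg hr.1.le _)
      refine add_le_add ?_ (hpk r hr).le
      refine hgm _ _ (abs_nonneg _) ?_
      show |p' r| ≤ |p r|
      rw [abs_of_nonneg (hpb' r).1, abs_of_nonneg (hpb r).1]; exact (hpb' r).2
    · exact PP_convex R K p' hp' hpbK

lemma leftD_neg (h : ℝ → ℝ) : leftD (fun t => h (-t)) = -rightD h := by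
  unfold leftD rightD
  rw [Real.sInf_def, neg_neg]
  congr 1
  ext x
  simp only [mem_image, Set.mem_neg, mem_Iio, mem_Ioi, neg_zero]
  constructor
  · rintro ⟨t, ht, rfl⟩
    exact ⟨-t, by linarith, by rw [div_neg]⟩
  · rintro ⟨t, ht, hx⟩
    refine ⟨-t, by linarith, ?_⟩
    rw [neg_neg, div_neg, hx, neg_neg]

lemma rightD_neg (h : ℝ → ℝ) : rightD (fun t => h (-t)) = -leftD h := by
  have := leftD_neg (fun t => h (-t))
  simp only [neg_neg] at this
  rw [show leftD h = leftD (fun t => h t) from rfl, this, neg_neg]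

def negW {N : ℕ} {R : ℝ} (u : RadW N R) : RadW N R :=
  ⟨fun r => -u.u r, fun r => -u.u' r, by simpa only [abs_neg] using u.integ, fun r hr => by
    rw [u.rep r hr, integral_neg]⟩

lemma memWmu_negW {N : ℕ} {R : ℝ} {μ : ℝ → ℝ≥0∞} {u : RadW N R} (hu : memWmu N R μ u) :
    memWmu N R μ (negW u) := by
  unfold memWmu negW at *
  simpa only [abs_neg] using hu

lemma Fcon_negW {N : ℕ} {R : ℝ} (g h : ℝ → ℝ) (u : RadW N R) :
    Fcon N R g h (negW u) = Fcon N R g (fun t => h (-t)) u := by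
  unfold Fcon negW
  simp only [abs_neg]

/-- under (g1), (g2), (h1) and (hg), if `h'₊(0) ≥ 0` there exists a
nondecreasing convex minimizer of `F` on `𝒲_μ`; symmetrically, if `h'₋(0) ≤ 0` there
exists a nonincreasing concave minimizer. -/
theorem constrained_convex_minimizer (N : ℕ) (hN : 1 ≤ N) (R : ℝ) (hR : 0 < R)
    (g h : ℝ → ℝ) (μ : ℝ → ℝ≥0∞)
    (hg1 : ConvexOn ℝ univ (fun z : ℝ => g |z|))
    (hg2 : 0 < MconstE g)
    (hh1 : ConvexOn ℝ univ h)
    (hhg : ((min |leftD h| |rightD h| * R : ℝ) : EReal) < ((N : ℝ) : EReal) * MconstE g)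
    (hμmono : MonotoneOn μ (Icc 0 R)) (hμpos : ∀ r ∈ Icc (0:ℝ) R, 0 < μ r) :
    (0 ≤ rightD h →
      ∃ ubar : RadW N R, memWmu N R μ ubar ∧
        (∀ u : RadW N R, memWmu N R μ u → Fcon N R g h ubar ≤ Fcon N R g h u) ∧
        MonotoneOn ubar.u (Ioc 0 R) ∧ ConvexOn ℝ (Ioc 0 R) ubar.u) ∧
    (leftD h ≤ 0 →
      ∃ ubar : RadW N R, memWmu N R μ ubar ∧
        (∀ u : RadW N R, memWmu N R μ u → Fcon N R g h ubar ≤ Fcon N R g h u) ∧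
        AntitoneOn ubar.u (Ioc 0 R) ∧ ConcaveOn ℝ (Ioc 0 R) ubar.u) := by
  refine ⟨core N hN R hR g h μ hg1 hg2 hh1 hhg hμmono, fun hl => ?_⟩
  have hh1' : ConvexOn ℝ univ (fun t => h (-t)) := by
    refine ⟨convex_univ, fun x _ y _ a b ha hb hab => ?_⟩
    have := hh1.2 (mem_univ (-x)) (mem_univ (-y)) ha hb hab
    simp only [smul_eq_mul] at this ⊢
    convert this using 2
    ring
  obtain ⟨v, hv1, hv2, hv3, hv4⟩ := core N hN R hR g (fun t => h (-t)) μ hg1 hg2 hh1'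
    (by rw [leftD_neg, rightD_neg, abs_neg, abs_neg, min_comm]; exact hhg) hμmono
    (by rw [rightD_neg]; linarith)
  refine ⟨negW v, memWmu_negW hv1, fun u hu => ?_, ?_, ?_⟩
  · rw [Fcon_negW]
    have h1 := hv2 (negW u) (memWmu_negW hu)
    have h2 := Fcon_negW g (fun t => h (-t)) u
    simp only [neg_neg] at h2
    rw [h2] at h1
    exact h1
  · exact hv3.neg
  · exact hv4.neg
end
end

section
/- Let N ≥ 1 be an integer, R > 0, L ≥ 0, and let w : [0,R] → ℝ be L-Lipschitz. Define ū(r) := min_{s ∈ [r,R]} w(s). Then ū is L-Lipschitz, nondecreasing, ū(r) ≤ w(r) for all r, ū(R) = w(R), and for every nondecreasing g : [0,∞) → [0,+∞] and every nondecreasing k : ℝ → ℝ one has ∫₀^R r^{N−1}[g(|ū′(r)|) + k(ū(r))] dr ≤ ∫₀^R r^{N−1}[g(|w′(r)|) + k(w(r))] dr. -/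
open MeasureTheory Set
open scoped ENNReal

noncomputable section

theorem rs_integrable (N : ℕ) (R : ℝ) (k f : ℝ → ℝ) (hk : Monotone k)
    (hf : ContinuousOn f (Icc 0 R)) :
    IntegrableOn (fun r => r ^ (N - 1) * k (f r)) (Ioc (0:ℝ) R) := by
  have h1 : AEStronglyMeasurable (fun r => k (f r)) (volume.restrict (Ioc (0:ℝ) R)) := by
    have : AEMeasurable f (volume.restrict (Ioc (0:ℝ) R)) :=
      (hf.mono Ioc_subset_Icc_self).aemeasurable measurableSet_Ioc
    exact (hk.measurable.comp_aemeasurable this).aestronglyMeasurable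
  obtain ⟨a, ha⟩ := (isCompact_Icc.image_of_continuousOn hf).bddBelow
  obtain ⟨b, hb⟩ := (isCompact_Icc.image_of_continuousOn hf).bddAbove
  have h2 : IntegrableOn (fun r : ℝ => r ^ (N - 1)) (Ioc (0:ℝ) R) :=
    ((continuous_pow (N - 1)).integrableOn_Icc (a := 0) (b := R)).mono_set Ioc_subset_Icc_self
  refine Integrable.mul_bdd (c := max |k a| |k b|) h2 h1 ?_
  filter_upwards [ae_restrict_mem measurableSet_Ioc] with r hr
  have hm : f r ∈ f '' Icc 0 R := mem_image_of_mem _ (Ioc_subset_Icc_self hr)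
  exact abs_le_max_abs_abs (hk (ha hm)) (hk (hb hm))

/-- monotone rearrangement via the Rising Sun Lemma. If `w : [0,R] → ℝ` is
`L`-Lipschitz and `ū(r) := min_{[r,R]} w`, then `ū` is `L`-Lipschitz, nondecreasing,
`ū ≤ w`, `ū(R) = w(R)`, and for every nondecreasing `g : [0,∞) → [0,+∞]` and
nondecreasing `k : ℝ → ℝ`,
`∫₀^R r^(N-1)[g(|ū'|) + k(ū)] dr ≤ ∫₀^R r^(N-1)[g(|w'|) + k(w)] dr`. -/
theorem rising_sun_rearrangement (N : ℕ) (hN : 1 ≤ N) (R L : ℝ) (hR : 0 < R) (hL : 0 ≤ L)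
    (w : ℝ → ℝ) (hw : LipschitzOnWith (Real.toNNReal L) w (Icc 0 R))
    (ubar : ℝ → ℝ) (hub : ∀ r ∈ Icc (0:ℝ) R, ubar r = sInf (w '' Icc r R)) :
    LipschitzOnWith (Real.toNNReal L) ubar (Icc 0 R) ∧
    MonotoneOn ubar (Icc 0 R) ∧
    (∀ r ∈ Icc (0:ℝ) R, ubar r ≤ w r) ∧
    ubar R = w R ∧
    ∀ g : ℝ → ℝ≥0∞, (∀ a b : ℝ, 0 ≤ a → a ≤ b → g a ≤ g b) →
      ∀ k : ℝ → ℝ, Monotone k →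
      ((∫⁻ r in Ioc (0:ℝ) R, ENNReal.ofReal (r ^ (N - 1)) * g |deriv ubar r| : ℝ≥0∞) : EReal)
          + ((∫ r in Ioc (0:ℝ) R, r ^ (N - 1) * k (ubar r) : ℝ) : EReal)
        ≤ ((∫⁻ r in Ioc (0:ℝ) R, ENNReal.ofReal (r ^ (N - 1)) * g |deriv w r| : ℝ≥0∞) : EReal)
          + ((∫ r in Ioc (0:ℝ) R, r ^ (N - 1) * k (w r) : ℝ) : EReal) := by
  have hcont := hw.continuousOn
  have hmin : ∀ r ∈ Icc (0:ℝ) R, ∃ t ∈ Icc r R, w t = ubar r := by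
    intro r hr
    have hc : IsCompact (w '' Icc r R) :=
      isCompact_Icc.image_of_continuousOn (hcont.mono (Icc_subset_Icc_left hr.1))
    have := hc.sInf_mem ((nonempty_Icc.2 hr.2).image w)
    rw [← hub r hr] at this
    exact this
  have hle : ∀ r ∈ Icc (0:ℝ) R, ∀ t ∈ Icc r R, ubar r ≤ w t := by
    intro r hr t ht
    have hc : IsCompact (w '' Icc r R) :=
      isCompact_Icc.image_of_continuousOn (hcont.mono (Icc_subset_Icc_left hr.1))
    rw [hub r hr]
    exact csInf_le hc.bddBelow (mem_image_of_mem _ ht)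
  have hmono : MonotoneOn ubar (Icc 0 R) := by
    intro r hr s hs hrs
    obtain ⟨t, ht, hts⟩ := hmin s hs
    rw [← hts]
    exact hle r hr t ⟨hrs.trans ht.1, ht.2⟩
  have hself : ∀ r ∈ Icc (0:ℝ) R, ubar r ≤ w r := fun r hr => hle r hr r ⟨le_rfl, hr.2⟩
  have hlip : LipschitzOnWith (Real.toNNReal L) ubar (Icc 0 R) := by
    apply LipschitzOnWith.of_le_add_mul
    intro s hs r hr
    rw [Real.coe_toNNReal L hL]
    have hd : 0 ≤ L * dist s r := mul_nonneg hL dist_nonneg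
    rcases le_total s r with h | h
    · linarith [hmono hs hr h]
    obtain ⟨t, ht, htr⟩ := hmin r hr
    rcases le_total s t with h' | h'
    · linarith [hle s hs t ⟨h', ht.2⟩]
    · have h3 := hw.dist_le_mul s hs t ⟨hr.1.trans ht.1, ht.2⟩
      rw [Real.coe_toNNReal L hL, Real.dist_eq, Real.dist_eq, abs_of_nonneg (sub_nonneg.2 h')] at h3
      rw [Real.dist_eq, abs_of_nonneg (sub_nonneg.2 h)]
      have h4 := le_abs_self (w s - w t)
      have h5 : L * (s - t) ≤ L * (s - r) := mul_le_mul_of_nonneg_left (by linarith [ht.1]) hL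
      linarith [hself s hs]
  refine ⟨hlip, hmono, hself, ?_, ?_⟩
  · have := hub R ⟨hR.le, le_rfl⟩
    simpa using this
  intro g hg k hk
  have hderiv : ∀ r ∈ Ioo (0:ℝ) R, DifferentiableAt ℝ w r → |deriv ubar r| ≤ |deriv w r| := by
    intro r hr hd
    have hrI := Ioo_subset_Icc_self hr
    have hnhds : Icc (0:ℝ) R ∈ nhds r := Icc_mem_nhds hr.1 hr.2
    rcases (hself r hrI).eq_or_lt with he | hlt
    · by_cases hu : DifferentiableAt ℝ ubar r
      · have hloc : IsLocalMin (fun x => w x - ubar x) r := by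
          filter_upwards [hnhds] with x hx
          linarith [hself x hx]
        have h0 := hloc.deriv_eq_zero
        have h1 : deriv (fun x => w x - ubar x) r = deriv w r - deriv ubar r := deriv_fun_sub hd hu
        have : deriv ubar r = deriv w r := by linarith
        rw [this]
      · rw [deriv_zero_of_not_differentiableAt hu]; simp
    · have hev : ∀ᶠ x in nhds r, ubar r < w x ∧ x ∈ Icc (0:ℝ) R :=
        (hd.continuousAt.eventually (lt_mem_nhds hlt)).and hnhds
      obtain ⟨δ, hδ, hball⟩ := Metric.eventually_nhds_iff_ball.1 hev
      have hconst : ubar =ᶠ[nhds r] fun _ => ubar r := by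
        filter_upwards [Metric.ball_mem_nhds r hδ] with s hs
        have hsI := (hball s hs).2
        have hbt : ∀ t ∈ uIcc r s, ubar r < w t := fun t ht =>
          (hball t ((convex_ball r δ).ordConnected.uIcc_subset
            (Metric.mem_ball_self hδ) hs ht)).1
        rcases le_total r s with h | h
        · obtain ⟨t, ht, htr⟩ := hmin r hrI
          refine le_antisymm ?_ (hmono hrI hsI h)
          rcases le_total s t with h' | h'
          · rw [← htr]; exact hle s hsI t ⟨h', ht.2⟩
          · have := hbt t (by rw [uIcc_of_le h]; exact ⟨ht.1, h'⟩)
            linarith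
        · obtain ⟨t, ht, hts⟩ := hmin s hsI
          have hm := hmono hsI hrI h
          refine le_antisymm hm ?_
          rcases le_total r t with h' | h'
          · rw [← hts]; exact hle r hrI t ⟨h', ht.2⟩
          · have := hbt t (by rw [uIcc_of_ge h]; exact ⟨ht.1, h'⟩)
            linarith
      rw [hconst.deriv_eq]; simp
  apply add_le_add
  · rw [EReal.coe_ennreal_le_coe_ennreal_iff, restrict_Ioo_eq_restrict_Ioc.symm]
    apply lintegral_mono_ae
    have hae := ae_restrict_of_ae (s := Ioo (0:ℝ) R) (hw.ae_differentiableWithinAt_of_mem_real)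
    filter_upwards [hae, ae_restrict_mem measurableSet_Ioo] with r h1 h2
    have hd := (h1 (Ioo_subset_Icc_self h2)).differentiableAt (Icc_mem_nhds h2.1 h2.2)
    exact mul_le_mul_right (hg _ _ (abs_nonneg _) (hderiv r h2 hd)) _
  · rw [EReal.coe_le_coe_iff]
    apply setIntegral_mono_on (rs_integrable N R k ubar hk hlip.continuousOn)
      (rs_integrable N R k w hk hcont) measurableSet_Ioc
    intro r hr
    exact mul_le_mul_of_nonneg_left (hk (hself r (Ioc_subset_Icc_self hr))) (pow_nonneg hr.1.le _)
end
end

section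
/- Let N ≥ 1 be an integer, R > 0, let q : [0,R] → [0,∞) be nondecreasing, and let p be absolutely continuous on [0,R] with p(0) = 0 and p′(r) = r^{N−1} q(r) for a.e. r ∈ [0,R]. Then: (a) for every δ ∈ (0,1], the function r ↦ r^{1−N−δ} p(r) is nondecreasing on (0,R]; (b) the function r ↦ r^{1−N} p(r) is nondecreasing on (0,R], and it is strictly increasing on (r₀,R] whenever r₀ ∈ [0,R) is such that q(r) > 0 for all r ∈ (r₀,R]. -/
open MeasureTheory Set
open scoped ENNReal

noncomputable section

/-- monotonicity of the momentum. If `q : [0,R] → [0,∞)` is nondecreasing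
and `p(r) = ∫₀^r ρ^(N-1) q(ρ) dρ` (that is, `p` is absolutely continuous, `p(0) = 0`,
`p' = r^(N-1) q` a.e.), then (a) `r ↦ r^(1-N-δ) p(r)` is nondecreasing on `(0,R]` for
every `δ ∈ (0,1]`, and (b) `r ↦ r^(1-N) p(r)` is nondecreasing on `(0,R]` and strictly
increasing on `(r₀,R]` whenever `q > 0` on `(r₀,R]`. -/
theorem momentum_monotonicity (N : ℕ) (hN : 1 ≤ N) (R : ℝ) (hR : 0 < R)
    (q : ℝ → ℝ) (hqmono : MonotoneOn q (Icc 0 R)) (hqpos : ∀ r ∈ Icc (0:ℝ) R, 0 ≤ q r)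
    (p : ℝ → ℝ) (hp : ∀ r ∈ Icc (0:ℝ) R, p r = ∫ ρ in Ioc (0:ℝ) r, ρ ^ (N - 1) * q ρ) :
    (∀ δ : ℝ, 0 < δ → δ ≤ 1 →
      MonotoneOn (fun r : ℝ => p r / r ^ ((N : ℝ) - 1 + δ)) (Ioc 0 R)) ∧
    MonotoneOn (fun r : ℝ => p r / r ^ (N - 1)) (Ioc 0 R) ∧
    (∀ r₀ ∈ Ico (0:ℝ) R, (∀ r ∈ Ioc r₀ R, 0 < q r) →
      StrictMonoOn (fun r : ℝ => p r / r ^ (N - 1)) (Ioc r₀ R)) := by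
  obtain ⟨n, rfl⟩ : ∃ n, N = n + 1 := ⟨N - 1, by omega⟩
  simp only [Nat.add_sub_cancel] at *
  have hint : ∀ r ∈ Icc (0:ℝ) R, ∀ s ∈ Icc (0:ℝ) R,
      IntervalIntegrable (fun ρ : ℝ => ρ ^ n * q ρ) volume r s := by
    intro r hr s hs
    have hq : IntervalIntegrable q volume r s :=
      (hqmono.mono (ordConnected_Icc.uIcc_subset hr hs)).intervalIntegrable
    exact hq.continuousOn_mul (by fun_prop)
  have hp' : ∀ r ∈ Icc (0:ℝ) R, p r = ∫ ρ in (0:ℝ)..r, ρ ^ n * q ρ := by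
    intro r hr
    rw [hp r hr, intervalIntegral.integral_of_le hr.1]
  have hG : ∀ r ∈ Ioc (0:ℝ) R, p r = r ^ (n + 1) * ∫ t in (0:ℝ)..1, t ^ n * q (r * t) := by
    intro r hr
    have h := intervalIntegral.integral_comp_mul_left (a := 0) (b := 1)
      (fun ρ : ℝ => ρ ^ n * q ρ) hr.1.ne'
    simp only [mul_zero, mul_one, mul_pow, mul_assoc, smul_eq_mul] at h
    rw [intervalIntegral.integral_const_mul, ← hp' r ⟨hr.1.le, hr.2⟩] at h
    rw [pow_succ', mul_assoc, h, mul_inv_cancel_left₀ hr.1.ne']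
  set G : ℝ → ℝ := fun r => ∫ t in (0:ℝ)..1, t ^ n * q (r * t) with hGdef
  have hmem : ∀ r ∈ Ioc (0:ℝ) R, ∀ t ∈ Icc (0:ℝ) 1, r * t ∈ Icc (0:ℝ) R := by
    intro r hr t ht
    exact ⟨mul_nonneg hr.1.le ht.1, (mul_le_of_le_one_right hr.1.le ht.2).trans hr.2⟩
  have hGint : ∀ r ∈ Ioc (0:ℝ) R,
      IntervalIntegrable (fun t : ℝ => t ^ n * q (r * t)) volume 0 1 := by
    intro r hr
    have hm : MonotoneOn (fun t => q (r * t)) (uIcc 0 1) := by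
      rw [uIcc_of_le zero_le_one]
      intro a ha b hb hab
      exact hqmono (hmem r hr a ha) (hmem r hr b hb) (mul_le_mul_of_nonneg_left hab hr.1.le)
    exact hm.intervalIntegrable.continuousOn_mul (by fun_prop)
  have hGmono : MonotoneOn G (Ioc 0 R) := by
    intro a ha b hb hab
    refine intervalIntegral.integral_mono_on zero_le_one (hGint a ha) (hGint b hb) ?_
    intro t ht
    exact mul_le_mul_of_nonneg_left (hqmono (hmem a ha t ht) (hmem b hb t ht)
      (mul_le_mul_of_nonneg_right hab ht.1)) (pow_nonneg ht.1 n)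
  have hGnn : ∀ r ∈ Ioc (0:ℝ) R, 0 ≤ G r := by
    intro r hr
    refine intervalIntegral.integral_nonneg zero_le_one ?_
    intro t ht
    exact mul_nonneg (pow_nonneg ht.1 n) (hqpos _ (hmem r hr t ht))
  have hb : ∀ r ∈ Ioc (0:ℝ) R, p r / r ^ n = r * G r := by
    intro r hr
    have := hr.1.ne'
    rw [hG r hr]
    change r ^ (n + 1) * G r / r ^ n = r * G r
    rw [pow_succ]
    field_simp
  refine ⟨?_, ?_, ?_⟩
  · intro δ hδ hδ1
    have ha : ∀ r ∈ Ioc (0:ℝ) R,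
        p r / r ^ (((n + 1 : ℕ) : ℝ) - 1 + δ) = r ^ (1 - δ) * G r := by
      intro r hr
      rw [hG r hr, mul_div_right_comm, ← Real.rpow_natCast, ← Real.rpow_sub hr.1]
      congr 2
      ring
    intro r hr s hs hrs
    simp only [ha r hr, ha s hs]
    exact mul_le_mul (Real.rpow_le_rpow hr.1.le hrs (by linarith)) (hGmono hr hs hrs)
      (hGnn r hr) (Real.rpow_nonneg hs.1.le _)
  · intro r hr s hs hrs
    simp only [hb r hr, hb s hs]
    exact mul_le_mul hrs (hGmono hr hs hrs) (hGnn r hr) hs.1.le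
  · intro r₀ hr₀ hpos r hr s hs hrs
    have hr' : r ∈ Ioc (0:ℝ) R := ⟨hr₀.1.trans_lt hr.1, hr.2⟩
    have hs' : s ∈ Ioc (0:ℝ) R := ⟨hr₀.1.trans_lt hs.1, hs.2⟩
    have h0 : (0:ℝ) ∈ Icc (0:ℝ) R := ⟨le_rfl, hR.le⟩
    have hr0 : r₀ ∈ Icc (0:ℝ) R := ⟨hr₀.1, hr₀.2.le⟩
    have hr1 : r ∈ Icc (0:ℝ) R := ⟨hr'.1.le, hr'.2⟩
    have hppos : 0 < p r := by
      rw [hp' r hr1, ← intervalIntegral.integral_add_adjacent_intervals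
        (hint 0 h0 r₀ hr0) (hint r₀ hr0 r hr1)]
      refine add_pos_of_nonneg_of_pos ?_ ?_
      · refine intervalIntegral.integral_nonneg hr₀.1 ?_
        intro t ht
        exact mul_nonneg (pow_nonneg ht.1 n) (hqpos t ⟨ht.1, ht.2.trans hr₀.2.le⟩)
      · refine intervalIntegral.intervalIntegral_pos_of_pos_on (hint r₀ hr0 r hr1) ?_ hr.1
        intro t ht
        exact mul_pos (pow_pos (hr₀.1.trans_lt ht.1) n) (hpos t ⟨ht.1, ht.2.le.trans hr.2⟩)
    have hGpos : 0 < G r := by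
      rw [hG r hr'] at hppos
      exact (pos_iff_pos_of_mul_pos hppos).1 (pow_pos hr'.1 _)
    simp only [hb r hr', hb s hs']
    exact mul_lt_mul hrs (hGmono hr' hs' hrs.le) hGpos hs'.1.le
end
end
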